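/- arXiv:1912.01283 — 3 statements merged into one kernel-verified Lean document; each statement's English description precedes it below -/
import Mathlib

section
/- Let Ω ⊂ ℝ^N (N ≥ 3) be a bounded open set with C² boundary. Let a ≥ 2 and let α, α* be reals with 0 < α − 1/2 < α* ≤ α; set λ := 2(α* − α) + 1 (so λ ∈ (0,1]). Let Φ : Ω → (0,∞) and G : {(x,y) ∈ Ω × Ω : x ≠ y} → (0,∞) be Borel measurable and assume there exist c₀ ≥ 1 and β₁ > 0 such that for every β ∈ (0,β₁), every x ∈ Σ_β and every y ∈ Ω with |x−y| ≥ aβ: Φ(x) G(x,y) ≤ c₀ β^{2α*} |x−y|^{2−N−2α} Φ(y). Then there exist C > 0 and β₂ ∈ (0,β₁] such that for every positive Borel measure τ on Ω with ∫_Ω Φ dτ < ∞ and every β ∈ (0,β₂): β^{−λ} ∫_{Σ_β} Φ(x) (∫_Ω G(x,y) 𝟙_{|x−y| ≥ aβ} dτ(y)) dH^{N−1}(x) ≤ C ∫_Ω Φ dτ. -/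
open MeasureTheory Metric Set

/-- `Ω` has `C²` boundary: near each boundary point, `Ω` coincides with the strict
sublevel set of a `C²` function with nonvanishing derivative. -/
def HasC2Boundary {N : ℕ} (Ω : Set (EuclideanSpace ℝ (Fin N))) : Prop :=
  ∀ p ∈ frontier Ω, ∃ (U : Set (EuclideanSpace ℝ (Fin N)))
    (f : EuclideanSpace ℝ (Fin N) → ℝ),
    IsOpen U ∧ p ∈ U ∧ ContDiffOn ℝ 2 f U ∧ (∀ x ∈ U, fderiv ℝ f x ≠ 0) ∧
    Ω ∩ U = {x ∈ U | f x < 0}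

/-!
If `q` is a nearest boundary point of `x'` and `x, x'` both lie at distance `β` from `∂Ω`, then
`q - (x' - x)` lies in the closed ball of radius `β` about `x`, hence in `closure Ω`. A defining
function `f` of `Ω` near `q` is therefore `≤ 0` there and `≥ 0` at `q`, so `f` cannot decrease
from `q - (x' - x)` to `q`. By symmetry the secants of `Σ_β` are almost tangent to `∂Ω`, and
projecting along a transversal bounds `H^{N-1}(Σ_β ∩ B(y, r))` by `C r^{N-1}`, uniformly for
small `β`. Since `N - 2 + 2α > N - 1`, summing over dyadic shells gives
`∫_{Σ_β, |x-y| ≥ aβ} |x-y|^{2-N-2α} dH^{N-1}(x) ≤ C β^{1-2α}`, and Tonelli concludes.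
-/

open Filter Topology Module
open scoped ENNReal NNReal

section UpperAhlforsRegular

variable {X Y : Type*} [MeasurableSpace X]

/-- Upper Ahlfors regularity of dimension `d`: balls of radius `r` have measure at most `C r ^ d`.
Balls are not required to be centred on the support of `μ`. -/
def IsUpperAhlforsRegular [PseudoMetricSpace X] (μ : Measure X) (d : ℝ) (C : ℝ≥0) : Prop :=
  ∀ (y : X) (r : ℝ≥0), μ (closedBall y r) ≤ (C * r ^ d : ℝ≥0)

namespace IsUpperAhlforsRegular

lemma mono [PseudoMetricSpace X] {μ ν : Measure X} {d : ℝ} {C : ℝ≥0}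
    (hν : IsUpperAhlforsRegular ν d C) (h : μ ≤ ν) : IsUpperAhlforsRegular μ d C :=
  fun y r => (h _).trans (hν y r)

lemma add [PseudoMetricSpace X] {μ ν : Measure X} {d : ℝ} {C C' : ℝ≥0}
    (hμ : IsUpperAhlforsRegular μ d C) (hν : IsUpperAhlforsRegular ν d C') :
    IsUpperAhlforsRegular (μ + ν) d (C + C') := fun y r => by
  rw [add_mul, ENNReal.coe_add]
  exact add_le_add (hμ y r) (hν y r)

lemma isLocallyFiniteMeasure [PseudoMetricSpace X] {μ : Measure X} {d : ℝ} {C : ℝ≥0}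
    (hμ : IsUpperAhlforsRegular μ d C) : IsLocallyFiniteMeasure μ :=
  ⟨fun x => ⟨closedBall x (1 : ℝ≥0), closedBall_mem_nhds x one_pos,
    (hμ x 1).trans_lt ENNReal.coe_lt_top⟩⟩

lemma of_isAddHaarMeasure {E : Type*} [NormedAddCommGroup E] [NormedSpace ℝ E]
    [FiniteDimensional ℝ E] [MeasurableSpace E] [BorelSpace E] (μ : Measure E)
    [μ.IsAddHaarMeasure] :
    IsUpperAhlforsRegular μ (finrank ℝ E) (μ (ball 0 1)).toNNReal := fun y r => by
  rw [Measure.addHaar_closedBall μ y r.coe_nonneg, ← NNReal.coe_pow, ENNReal.ofReal_coe_nnreal,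
    ENNReal.coe_mul, ENNReal.coe_toNNReal measure_ball_lt_top.ne, NNReal.rpow_natCast, mul_comm]

lemma hausdorffMeasure_restrict [MetricSpace X] [BorelSpace X] [MetricSpace Y]
    [MeasurableSpace Y] [BorelSpace Y] {P : X → Y} {S : Set X} {K L C : ℝ≥0} {d : ℝ}
    (hd : 0 ≤ d) (hY : IsUpperAhlforsRegular (μH[d] : Measure Y) d C) (hP : LipschitzWith L P)
    (hS : AntilipschitzWith K (S.domRestrict P)) :
    IsUpperAhlforsRegular (μH[d].restrict S) d (K ^ d * C * L ^ d) := fun y r => by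
  set T : Set S := Subtype.val ⁻¹' closedBall y r with hT
  have hT_image : S.domRestrict P '' T ⊆ closedBall (P y) (L * r : ℝ≥0) := by
    rintro _ ⟨x, hx, rfl⟩
    exact hP.mapsTo_closedBall y r hx
  calc μH[d].restrict S (closedBall y r)
      = μH[d] (Subtype.val '' T) := by
        rw [Measure.restrict_apply measurableSet_closedBall, hT, Subtype.image_preimage_coe,
          inter_comm]
    _ = μH[d] T := isometry_subtype_coe.hausdorffMeasure_image (Or.inl hd) T
    _ ≤ (K : ℝ≥0∞) ^ d * μH[d] (S.domRestrict P '' T) := hS.le_hausdorffMeasure_image hd T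
    _ ≤ (K : ℝ≥0∞) ^ d * (C * (L * r) ^ d : ℝ≥0) := by
        gcongr
        exact (measure_mono hT_image).trans (hY (P y) (L * r))
    _ = (K ^ d * C * L ^ d * r ^ d : ℝ≥0) := by
        rw [← ENNReal.coe_rpow_of_nonneg _ hd, ← ENNReal.coe_mul, NNReal.mul_rpow]
        congr 1
        ring

end IsUpperAhlforsRegular

end UpperAhlforsRegular

section Secants

variable {E F : Type*} [NormedAddCommGroup E] [NormedSpace ℝ E] [NormedAddCommGroup F]
  [NormedSpace ℝ F]

lemma norm_le_two_mul_norm_projKerOfRightInverse {A : E →L[ℝ] F} {B : F →L[ℝ] E}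
    (hBA : Function.RightInverse B A) {v : E} (hv : ‖B‖ * ‖A v‖ ≤ ‖v‖ / 2) :
    ‖v‖ ≤ 2 * ‖A.projKerOfRightInverse B hBA v‖ := by
  have hproj : ‖A.projKerOfRightInverse B hBA v‖ = ‖v - B (A v)‖ := by
    rw [← A.coe_projKerOfRightInverse_apply B hBA v, Submodule.norm_coe]
  linarith [norm_sub_norm_le v (B (A v)), B.le_opNorm (A v)]

variable [FiniteDimensional ℝ E] [MeasurableSpace E] [BorelSpace E]

lemma exists_isUpperAhlforsRegular_of_secants [FiniteDimensional ℝ F] {A : E →L[ℝ] F}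
    (hA : Function.Surjective A) :
    ∃ c > (0 : ℝ≥0), ∃ C : ℝ≥0, ∀ S : Set E, (∀ x ∈ S, ∀ x' ∈ S, ‖A (x - x')‖ ≤ c * ‖x - x'‖) →
      IsUpperAhlforsRegular (μH[finrank ℝ A.ker].restrict S) (finrank ℝ A.ker) C := by
  obtain ⟨B, hB⟩ := A.exists_rightInverse_of_surjective (LinearMap.range_eq_top.2 hA)
  have hBA : Function.RightInverse B A := DFunLike.congr_fun hB
  have := isAddHaarMeasure_hausdorffMeasure (E := A.ker)
  refine ⟨(2 * (‖B‖₊ + 1))⁻¹, by positivity, _, fun S hS =>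
    (IsUpperAhlforsRegular.of_isAddHaarMeasure μH[finrank ℝ A.ker]).hausdorffMeasure_restrict
      (K := 2) (Nat.cast_nonneg _) (A.projKerOfRightInverse B hBA).lipschitz
      (AntilipschitzWith.of_le_mul_dist fun x x' => ?_)⟩
  rw [domRestrict_apply, domRestrict_apply, dist_eq_norm (A.projKerOfRightInverse B hBA x),
    ← map_sub, Subtype.dist_eq, dist_eq_norm]
  refine norm_le_two_mul_norm_projKerOfRightInverse hBA ?_
  have hsecant := hS x x.2 x' x'.2
  push_cast at hsecant
  calc ‖B‖ * ‖A (x - x' : E)‖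
      ≤ (‖B‖ + 1) * ((2 * (‖B‖ + 1))⁻¹ * ‖(x - x' : E)‖) := by
        gcongr
        linarith
    _ = ‖(x - x' : E)‖ / 2 := by field_simp

end Secants

section InnerLevelSet

variable {X : Type*} [PseudoMetricSpace X] {Ω : Set X}

/-- The set `Σ_β` of points of `Ω` at distance `β` from `∂Ω`. It is empty for `β ≠ 0` if `∂Ω` is,
as `infDist` to the empty set is `0`. -/
def innerLevelSet (Ω : Set X) (β : ℝ) : Set X := {x ∈ Ω | infDist x (frontier Ω) = β}

lemma measurableSet_innerLevelSet [MeasurableSpace X] [OpensMeasurableSpace X]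
    (hΩ : MeasurableSet Ω) (β : ℝ) : MeasurableSet (innerLevelSet Ω β) :=
  hΩ.inter ((isClosed_singleton.preimage (continuous_infDist_pt _)).measurableSet)

lemma exists_mem_frontier_dist_eq [ProperSpace X] {x : X} {β : ℝ} (hβ : 0 < β)
    (hx : x ∈ innerLevelSet Ω β) : ∃ q ∈ frontier Ω, dist x q = β := by
  have hne : (frontier Ω).Nonempty := by
    by_contra hempty
    rw [not_nonempty_iff_eq_empty] at hempty
    have h := hx.2
    rw [hempty, infDist_empty] at h
    exact hβ.ne h
  obtain ⟨q, hq, hxq⟩ := isClosed_frontier.exists_infDist_eq_dist hne x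
  exact ⟨q, hq, hxq.symm.trans hx.2⟩

lemma exists_nhds_disjoint_innerLevelSet [ProperSpace X] {p : X} (hp : p ∉ frontier Ω) :
    ∃ t ∈ 𝓝 p, ∀ᶠ β in 𝓝[>] 0, Disjoint (innerLevelSet Ω β) t := by
  obtain ⟨η, hη, hball⟩ := Metric.mem_nhds_iff.1 (isClosed_frontier.isOpen_compl.mem_nhds hp)
  refine ⟨ball p (η / 2), ball_mem_nhds p (half_pos hη), ?_⟩
  filter_upwards [Ioo_mem_nhdsGT (half_pos hη)] with β hβ
  refine disjoint_left.2 fun x hx hxp => ?_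
  obtain ⟨q, hq, hxq⟩ := exists_mem_frontier_dist_eq hβ.1 hx
  refine hball (mem_ball.2 ?_) hq
  linarith [dist_triangle_left q p x, mem_ball.1 hxp, hβ.2]

end InnerLevelSet

section SublevelSet

variable {E : Type*} [NormedAddCommGroup E] [NormedSpace ℝ E] {Ω : Set E}

lemma ball_infDist_frontier_subset (hΩ : IsOpen Ω) {x : E} (hx : x ∈ Ω) :
    ball x (infDist x (frontier Ω)) ⊆ Ω := by
  rcases le_or_gt (infDist x (frontier Ω)) 0 with h | h
  · simp only [ball_eq_empty.2 h, empty_subset]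
  refine (convex_ball x _).isPreconnected.subset_of_closure_inter_subset hΩ
    ⟨x, mem_ball_self h, hx⟩ ?_
  rintro z ⟨hz_closure, hz_ball⟩
  by_contra hzΩ
  have hz_frontier : z ∈ frontier Ω := hΩ.frontier_eq ▸ ⟨hz_closure, hzΩ⟩
  exact (infDist_le_dist_of_mem hz_frontier).not_gt (mem_ball'.1 hz_ball)

lemma closedBall_infDist_frontier_subset_closure (hΩ : IsOpen Ω) {x : E} (hx : x ∈ Ω) :
    closedBall x (infDist x (frontier Ω)) ⊆ closure Ω := by
  rcases eq_or_ne (infDist x (frontier Ω)) 0 with h | h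
  · rw [h, closedBall_zero, singleton_subset_iff]
    exact subset_closure hx
  · rw [← closure_ball x h]
    exact closure_mono (ball_infDist_frontier_subset hΩ hx)

lemma neg_mul_norm_le_apply_sub_of_dist_eq_infDist (hΩ : IsOpen Ω) {V : Set E} (hV : IsOpen V)
    {f : E → ℝ} {A : E →L[ℝ] ℝ} {c : ℝ≥0} (hf : ApproximatesLinearOn f A V c)
    (hΩV : ∀ z ∈ V, (z ∈ Ω ↔ f z < 0)) {x x' q : E} (hx : x ∈ Ω) (hq : q ∈ frontier Ω)
    (hqx' : dist x' q = infDist x (frontier Ω)) (hqV : q ∈ V) (hqV' : q - (x' - x) ∈ V) :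
    -(c * ‖x' - x‖) ≤ A (x' - x) := by
  have hf_nonneg : 0 ≤ f q := by
    rw [hΩ.frontier_eq] at hq
    exact not_lt.1 fun h => hq.2 ((hΩV q hqV).2 h)
  have hclosure : q - (x' - x) ∈ closure Ω := by
    refine closedBall_infDist_frontier_subset_closure hΩ hx (mem_closedBall.2 ?_)
    rw [← hqx', dist_comm x', dist_eq_norm, dist_eq_norm, sub_sub, sub_add_cancel]
  have hf_nonpos : f (q - (x' - x)) ≤ 0 := by
    have hmaps : MapsTo f (V ∩ Ω) (Iic 0) := fun z hz => ((hΩV z hz.1).1 hz.2).le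
    have hcont : ContinuousWithinAt f (V ∩ Ω) (q - (x' - x)) :=
      (hf.continuousOn _ hqV').mono inter_subset_left
    simpa only [closure_Iic, mem_Iic] using
      hcont.mem_closure (hV.inter_closure ⟨hqV', hclosure⟩) hmaps
  have happrox := hf q hqV (q - (x' - x)) hqV'
  rw [sub_sub_cancel, Real.norm_eq_abs] at happrox
  linarith [(abs_le.1 happrox).2]

lemma exists_nhds_secants_innerLevelSet [ProperSpace E] (hΩ : IsOpen Ω) {p : E} {f : E → ℝ}
    {A : E →L[ℝ] ℝ} (hf : HasStrictFDerivAt f A p) (hfΩ : ∀ᶠ z in 𝓝 p, z ∈ Ω ↔ f z < 0)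
    {c : ℝ≥0} (hc : 0 < c) :
    ∃ t ∈ 𝓝 p, ∀ᶠ β in 𝓝[>] 0, ∀ x ∈ innerLevelSet Ω β ∩ t, ∀ x' ∈ innerLevelSet Ω β ∩ t,
      ‖A (x - x')‖ ≤ c * ‖x - x'‖ := by
  obtain ⟨W, hW, hfW⟩ := hf.approximates_deriv_on_nhds (Or.inr hc)
  obtain ⟨η, hη, hball⟩ := Metric.mem_nhds_iff.1 (inter_mem hW hfΩ)
  obtain ⟨hballW, hballΩ⟩ := subset_inter_iff.1 hball
  refine ⟨ball p (η / 4), ball_mem_nhds p (by positivity), ?_⟩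
  filter_upwards [Ioo_mem_nhdsGT (show 0 < η / 4 by positivity)] with β hβ
  have one_sided : ∀ x ∈ innerLevelSet Ω β ∩ ball p (η / 4),
      ∀ x' ∈ innerLevelSet Ω β ∩ ball p (η / 4), -(c * ‖x' - x‖) ≤ A (x' - x) := by
    rintro x ⟨hx, hxp⟩ x' ⟨hx', hxp'⟩
    obtain ⟨q, hq, hx'q⟩ := exists_mem_frontier_dist_eq hβ.1 hx'
    have hqp : dist q p < η / 2 := by
      linarith [dist_triangle_left q p x', mem_ball.1 hxp', hβ.2]
    have hxx' : ‖x' - x‖ < η / 2 := by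
      rw [← dist_eq_norm]
      linarith [dist_triangle_right x' x p, mem_ball.1 hxp, mem_ball.1 hxp']
    have hqp' : dist (q - (x' - x)) p < η := by
      have hshift : dist (q - (x' - x)) q = ‖x' - x‖ := by
        rw [dist_eq_norm, sub_sub_cancel_left, norm_neg]
      linarith [dist_triangle (q - (x' - x)) q p]
    exact neg_mul_norm_le_apply_sub_of_dist_eq_infDist hΩ isOpen_ball (hfW.mono_set hballW)
      (fun z hz => hballΩ hz) hx.1 hq (hx'q.trans hx.2.symm) (mem_ball.2 (by linarith)) hqp'
  intro x hx x' hx'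
  have hle := one_sided x hx x' hx'
  rw [← neg_sub, map_neg, norm_neg, neg_le_neg_iff] at hle
  exact abs_le.2 ⟨one_sided x' hx' x hx, hle⟩

end SublevelSet

section BoundaryRegularity

variable {E : Type*} [NormedAddCommGroup E] [NormedSpace ℝ E] {Ω : Set E}

/-- Near each boundary point, `Ω` is the strict sublevel set of a function that is strictly
differentiable with nonzero derivative at that point. This is slightly weaker than having `C¹`
boundary, as the defining function may depend on the point. -/
def HasStrictFDerivBoundary (Ω : Set E) : Prop :=
  ∀ p ∈ frontier Ω, ∃ (f : E → ℝ) (A : E →L[ℝ] ℝ),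
    HasStrictFDerivAt f A p ∧ A ≠ 0 ∧ ∀ᶠ z in 𝓝 p, z ∈ Ω ↔ f z < 0

lemma HasC2Boundary.hasStrictFDerivBoundary {N : ℕ} {Ω : Set (EuclideanSpace ℝ (Fin N))}
    (hΩ : HasC2Boundary Ω) : HasStrictFDerivBoundary Ω := by
  intro p hp
  obtain ⟨U, f, hU, hpU, hf, hf', hΩU⟩ := hΩ p hp
  refine ⟨f, fderiv ℝ f p, (hf.contDiffAt (hU.mem_nhds hpU)).hasStrictFDerivAt two_ne_zero,
    hf' p hpU, ?_⟩
  filter_upwards [hU.mem_nhds hpU] with z hz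
  simpa only [mem_inter_iff, mem_ofPred_eq, hz, and_true, true_and] using Set.ext_iff.1 hΩU z

variable [FiniteDimensional ℝ E] [MeasurableSpace E] [BorelSpace E]

lemma HasStrictFDerivBoundary.exists_nhds_isUpperAhlforsRegular (hΩo : IsOpen Ω)
    (hΩ : HasStrictFDerivBoundary Ω) (p : E) :
    ∃ t ∈ 𝓝 p, ∃ C : ℝ≥0, ∀ᶠ β in 𝓝[>] (0 : ℝ), IsUpperAhlforsRegular
      (μH[(finrank ℝ E : ℝ) - 1].restrict (innerLevelSet Ω β ∩ t)) (finrank ℝ E - 1) C := by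
  have := FiniteDimensional.proper_real E
  by_cases hp : p ∈ frontier Ω
  · obtain ⟨f, A, hf, hA, hfΩ⟩ := hΩ p hp
    have hA' : (A : E →ₗ[ℝ] ℝ) ≠ 0 := fun h => hA (ContinuousLinearMap.coe_injective h)
    have hfinrank : (finrank ℝ E : ℝ) - 1 = finrank ℝ A.ker := by
      rw [← Module.Dual.finrank_ker_add_one_of_ne_zero hA', Nat.cast_add_one, add_sub_cancel_right]
    obtain ⟨c, hc, C, hC⟩ := exists_isUpperAhlforsRegular_of_secants (LinearMap.surjective hA')
    obtain ⟨t, ht, hsecants⟩ := exists_nhds_secants_innerLevelSet hΩo hf hfΩ hc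
    rw [hfinrank]
    exact ⟨t, ht, C, hsecants.mono fun β hβ => hC _ hβ⟩
  · obtain ⟨t, ht, hdisj⟩ := exists_nhds_disjoint_innerLevelSet hp
    refine ⟨t, ht, 0, hdisj.mono fun β hβ y r => ?_⟩
    simp only [hβ.inter_eq, Measure.restrict_empty, Measure.coe_zero, Pi.zero_apply, zero_le]

lemma HasStrictFDerivBoundary.exists_isUpperAhlforsRegular (hΩo : IsOpen Ω)
    (hΩb : Bornology.IsBounded Ω) (hΩ : HasStrictFDerivBoundary Ω) :
    ∃ C : ℝ≥0, ∀ᶠ β in 𝓝[>] (0 : ℝ), IsUpperAhlforsRegular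
      (μH[(finrank ℝ E : ℝ) - 1].restrict (innerLevelSet Ω β)) (finrank ℝ E - 1) C := by
  have := FiniteDimensional.proper_real E
  suffices h : ∃ C : ℝ≥0, ∀ᶠ β in 𝓝[>] (0 : ℝ), IsUpperAhlforsRegular
      (μH[(finrank ℝ E : ℝ) - 1].restrict (innerLevelSet Ω β ∩ closure Ω)) (finrank ℝ E - 1) C by
    obtain ⟨C, hC⟩ := h
    refine ⟨C, hC.mono fun β hβ => ?_⟩
    rwa [inter_eq_left.2 fun x hx => subset_closure hx.1] at hβ
  refine hΩb.isCompact_closure.induction_on (p := fun t => ∃ C : ℝ≥0, ∀ᶠ β in 𝓝[>] (0 : ℝ),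
    IsUpperAhlforsRegular (μH[(finrank ℝ E : ℝ) - 1].restrict (innerLevelSet Ω β ∩ t))
      (finrank ℝ E - 1) C) ⟨0, .of_forall fun β y r => ?_⟩ ?_ ?_ fun p _ => ?_
  · simp only [inter_empty, Measure.restrict_empty, Measure.coe_zero, Pi.zero_apply, zero_le]
  · rintro s t hst ⟨C, hC⟩
    exact ⟨C, hC.mono fun β hβ =>
      hβ.mono (Measure.restrict_mono_set _ (inter_subset_inter_right _ hst))⟩
  · rintro s t ⟨C, hC⟩ ⟨C', hC'⟩
    refine ⟨C + C', (hC.and hC').mono fun β hβ => (hβ.1.add hβ.2).mono ?_⟩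
    rw [inter_union_distrib_left]
    exact Measure.restrict_union_le _ _
  · obtain ⟨t, ht, h⟩ := hΩ.exists_nhds_isUpperAhlforsRegular hΩo p
    exact ⟨t, mem_nhdsWithin_of_mem_nhds ht, h⟩

end BoundaryRegularity

section TruncatedRieszKernel

variable {X : Type*} [PseudoMetricSpace X]

open scoped Classical in
/-- The Riesz kernel `|x - y| ^ (-s)`, cut off to `0` at distances less than `R`. It majorizes
`Φ(x) G(x, y) / Φ(y)` on `|x - y| ≥ R` up to a constant. -/
noncomputable def truncatedRieszKernel (s : ℝ) (R : ℝ≥0) (x y : X) : ℝ≥0∞ :=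
  if R ≤ nndist x y then ((nndist x y ^ (-s) : ℝ≥0) : ℝ≥0∞) else 0

lemma truncatedRieszKernel_le_tsum_indicator {s : ℝ} (hs : 0 ≤ s) {R : ℝ≥0} (hR : 0 < R)
    (x y : X) :
    truncatedRieszKernel s R x y ≤ ∑' k : ℕ, (closedBall y (2 ^ (k + 1) * R : ℝ≥0)).indicator
      (fun _ => (((2 ^ k * R) ^ (-s) : ℝ≥0) : ℝ≥0∞)) x := by
  unfold truncatedRieszKernel
  split_ifs with hx
  · obtain ⟨k, hk_le, hk_lt⟩ := exists_nat_pow_near ((one_le_div hR).2 hx) one_lt_two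
    rw [le_div_iff₀ hR] at hk_le
    rw [div_lt_iff₀ hR] at hk_lt
    refine le_trans ?_ (ENNReal.le_tsum k)
    rw [indicator_of_mem (mem_closedBall.2 (by exact_mod_cast hk_lt.le))]
    exact ENNReal.coe_le_coe.2 (NNReal.rpow_le_rpow_of_nonpos (by positivity) hk_le (by linarith))
  · exact zero_le

variable [MeasurableSpace X] [OpensMeasurableSpace X]

lemma measurable_uncurry_truncatedRieszKernel [SecondCountableTopology X] (s : ℝ) (R : ℝ≥0) :
    Measurable (Function.uncurry (truncatedRieszKernel s R : X → X → ℝ≥0∞)) :=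
  Measurable.ite (measurableSet_le measurable_const measurable_nndist)
    (measurable_nndist.pow_const _).coe_nnreal_ennreal measurable_const

lemma dyadicShell_bound_eq (d s : ℝ) {R : ℝ≥0} (hR : 0 < R) (k : ℕ) :
    (2 ^ k * R) ^ (-s) * (2 ^ (k + 1) * R) ^ d = 2 ^ d * R ^ (d - s) * (2 ^ (d - s)) ^ k := by
  have hpow : ((2 : ℝ≥0) ^ k) ^ (d - s) = (2 ^ (d - s)) ^ k := by
    rw [← NNReal.rpow_natCast, ← NNReal.rpow_natCast, ← NNReal.rpow_mul, ← NNReal.rpow_mul,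
      mul_comm]
  calc (2 ^ k * R) ^ (-s) * (2 ^ (k + 1) * R) ^ d
      = 2 ^ d * ((2 ^ k * R) ^ (-s) * (2 ^ k * R) ^ d) := by
        rw [pow_succ', mul_assoc, NNReal.mul_rpow (x := 2), mul_left_comm]
    _ = 2 ^ d * (2 ^ k * R) ^ (d - s) := by
        rw [← NNReal.rpow_add (by positivity), neg_add_eq_sub]
    _ = 2 ^ d * R ^ (d - s) * (2 ^ (d - s)) ^ k := by
        rw [NNReal.mul_rpow, hpow]
        ring

namespace IsUpperAhlforsRegular

variable {μ : Measure X} {d s : ℝ} {C R : ℝ≥0}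

lemma lintegral_truncatedRieszKernel_le (hμ : IsUpperAhlforsRegular μ d C) (hs : 0 ≤ s)
    (hds : d < s) (hR : 0 < R) (y : X) :
    ∫⁻ x, truncatedRieszKernel s R x y ∂μ ≤
      (C * 2 ^ d * (1 - 2 ^ (d - s))⁻¹ * R ^ (d - s) : ℝ≥0) := by
  have hratio : (2 : ℝ≥0) ^ (d - s) < 1 :=
    NNReal.rpow_lt_one_of_one_lt_of_neg one_lt_two (sub_neg.2 hds)
  calc ∫⁻ x, truncatedRieszKernel s R x y ∂μ
      ≤ ∫⁻ x, ∑' k : ℕ, (closedBall y (2 ^ (k + 1) * R : ℝ≥0)).indicator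
          (fun _ => (((2 ^ k * R) ^ (-s) : ℝ≥0) : ℝ≥0∞)) x ∂μ :=
        lintegral_mono fun x => truncatedRieszKernel_le_tsum_indicator hs hR x y
    _ = ∑' k : ℕ, ((2 ^ k * R) ^ (-s) : ℝ≥0) * μ (closedBall y (2 ^ (k + 1) * R : ℝ≥0)) := by
        rw [lintegral_tsum fun k =>
          (measurable_const.indicator measurableSet_closedBall).aemeasurable]
        simp only [lintegral_indicator_const measurableSet_closedBall]
    _ ≤ ∑' k : ℕ, ((C * 2 ^ d * R ^ (d - s) * (2 ^ (d - s)) ^ k : ℝ≥0) : ℝ≥0∞) := by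
        refine ENNReal.tsum_le_tsum fun k => (mul_le_mul_right (hμ y _) _).trans_eq ?_
        rw [← ENNReal.coe_mul, mul_left_comm, dyadicShell_bound_eq d s hR k, mul_assoc, mul_assoc,
          mul_assoc]
    _ = (C * 2 ^ d * (1 - 2 ^ (d - s))⁻¹ * R ^ (d - s) : ℝ≥0) := by
        rw [← ENNReal.coe_tsum ((NNReal.summable_geometric hratio).mul_left _),
          NNReal.tsum_mul_left, NNReal.tsum_geometric hratio, mul_right_comm]

end IsUpperAhlforsRegular

lemma lintegral_lintegral_mul_le_of_forall_lintegral_le {X Y : Type*} [MeasurableSpace X]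
    [MeasurableSpace Y] {μ : Measure X} [SFinite μ] {τ : Measure Y} {k : X → Y → ℝ≥0∞}
    (hk : Measurable (Function.uncurry k)) {w : Y → ℝ≥0∞} (hw : Measurable w)
    (hwτ : ∫⁻ y, w y ∂τ ≠ ∞) {M : ℝ≥0∞} (hM : ∀ y, ∫⁻ x, k x y ∂μ ≤ M) :
    ∫⁻ x, ∫⁻ y, w y * k x y ∂τ ∂μ ≤ M * ∫⁻ y, w y ∂τ := by
  have := isFiniteMeasure_withDensity hwτ
  calc ∫⁻ x, ∫⁻ y, w y * k x y ∂τ ∂μ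
      = ∫⁻ x, ∫⁻ y, k x y ∂(τ.withDensity w) ∂μ := lintegral_congr fun x =>
        (lintegral_withDensity_eq_lintegral_mul τ hw (hk.comp measurable_prodMk_left)).symm
    _ = ∫⁻ y, ∫⁻ x, k x y ∂μ ∂(τ.withDensity w) := lintegral_lintegral_swap hk.aemeasurable
    _ ≤ ∫⁻ _, M ∂(τ.withDensity w) := lintegral_mono hM
    _ = M * ∫⁻ y, w y ∂τ := by
        rw [lintegral_const, withDensity_apply _ MeasurableSet.univ, Measure.restrict_univ]

lemma IsUpperAhlforsRegular.lintegral_mul_setLIntegral_le [SecondCountableTopology X]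
    {μ τ : Measure X} {d s : ℝ} {C R M : ℝ≥0} (hμ : IsUpperAhlforsRegular μ d C) (hs : 0 ≤ s)
    (hds : d < s) (hR : 0 < R) {u w : X → ℝ≥0∞} {g : X → X → ℝ≥0∞} (hw : Measurable w)
    (hwτ : ∫⁻ y, w y ∂τ ≠ ∞)
    (hg : ∀ᵐ x ∂μ, ∀ᵐ y ∂τ, R ≤ nndist x y →
      u x * g x y ≤ M * (w y * (nndist x y ^ (-s) : ℝ≥0))) :
    ∫⁻ x, u x * ∫⁻ y in {y | R ≤ nndist x y}, g x y ∂τ ∂μ ≤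
      M * ((C * 2 ^ d * (1 - 2 ^ (d - s))⁻¹ * R ^ (d - s) : ℝ≥0) * ∫⁻ y, w y ∂τ) := by
  have := hμ.isLocallyFiniteMeasure
  have hinner : ∀ᵐ x ∂μ, u x * ∫⁻ y in {y | R ≤ nndist x y}, g x y ∂τ ≤
      M * ∫⁻ y, w y * truncatedRieszKernel s R x y ∂τ := by
    filter_upwards [hg] with x hx
    rw [← lintegral_const_mul' _ _ ENNReal.coe_ne_top]
    refine (lintegral_const_mul_le _ _).trans ?_
    rw [← lintegral_indicator (measurableSet_le measurable_const (by fun_prop))]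
    refine lintegral_mono_ae (hx.mono fun y hy => ?_)
    by_cases hxy : R ≤ nndist x y
    · rw [indicator_of_mem (show y ∈ {y | R ≤ nndist x y} from hxy), truncatedRieszKernel,
        if_pos hxy]
      exact hy hxy
    · rw [indicator_of_notMem (show y ∉ {y | R ≤ nndist x y} from hxy)]
      exact zero_le
  calc ∫⁻ x, u x * ∫⁻ y in {y | R ≤ nndist x y}, g x y ∂τ ∂μ
      ≤ ∫⁻ x, M * ∫⁻ y, w y * truncatedRieszKernel s R x y ∂τ ∂μ := lintegral_mono_ae hinner
    _ = M * ∫⁻ x, ∫⁻ y, w y * truncatedRieszKernel s R x y ∂τ ∂μ :=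
        lintegral_const_mul' _ _ ENNReal.coe_ne_top
    _ ≤ _ := by
        gcongr
        exact lintegral_lintegral_mul_le_of_forall_lintegral_le
          (measurable_uncurry_truncatedRieszKernel s R) hw hwτ
          (hμ.lintegral_truncatedRieszKernel_le hs hds hR)

lemma ofReal_rpow_mul_setLIntegral_mul_setLIntegral_le [SecondCountableTopology X]
    {μ τ : Measure X} {S Ω : Set X} (hS : MeasurableSet S) (hΩ : MeasurableSet Ω) {d s κ : ℝ}
    {C a β : ℝ≥0} (hμ : IsUpperAhlforsRegular (μ.restrict S) d C) (hs : 0 ≤ s) (hds : d < s)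
    (ha : 0 < a) (hβ : 0 < β) {Φ : X → ℝ} {G : X → X → ℝ} {c₀ : ℝ} (hΦm : Measurable Φ)
    (hΦS : ∀ x ∈ S, 0 ≤ Φ x) (hΦΩ : ∀ y ∈ Ω, 0 ≤ Φ y)
    (hτ : ∫⁻ y in Ω, ENNReal.ofReal (Φ y) ∂τ ≠ ∞)
    (hG : ∀ x ∈ S, ∀ y ∈ Ω, a * β ≤ dist x y →
      Φ x * G x y ≤ c₀ * β ^ κ * dist x y ^ (-s) * Φ y) :
    ENNReal.ofReal (β ^ (s - d - κ)) *
        ∫⁻ x in S, ENNReal.ofReal (Φ x) *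
          ∫⁻ y in {y ∈ Ω | a * β ≤ dist x y}, ENNReal.ofReal (G x y) ∂τ ∂μ ≤
      (c₀.toNNReal * (C * 2 ^ d * (1 - 2 ^ (d - s))⁻¹ * a ^ (d - s)) : ℝ≥0) *
        ∫⁻ y in Ω, ENNReal.ofReal (Φ y) ∂τ := by
  have hkernel : ∀ᵐ x ∂μ.restrict S, ∀ᵐ y ∂τ.restrict Ω, a * β ≤ nndist x y →
      ENNReal.ofReal (Φ x) * ENNReal.ofReal (G x y) ≤ (c₀.toNNReal * β ^ κ : ℝ≥0) *
        (ENNReal.ofReal (Φ y) * (nndist x y ^ (-s) : ℝ≥0)) := by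
    filter_upwards [ae_restrict_mem hS] with x hx
    filter_upwards [ae_restrict_mem hΩ] with y hy hxy
    rw [← ENNReal.ofReal_mul (hΦS x hx)]
    refine (ENNReal.ofReal_le_ofReal (hG x hx y hy (mod_cast hxy))).trans_eq ?_
    rw [ENNReal.ofReal_mul' (hΦΩ y hy), ENNReal.ofReal_mul' (by positivity),
      ENNReal.ofReal_mul' (by positivity), ← coe_nndist, ← NNReal.coe_rpow, ← NNReal.coe_rpow,
      ENNReal.ofReal_coe_nnreal, ENNReal.ofReal_coe_nnreal, ENNReal.coe_mul, ENNReal.ofReal]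
    ring
  have hdomain : ∀ x, τ.restrict {y ∈ Ω | a * β ≤ dist x y} =
      (τ.restrict Ω).restrict {y | a * β ≤ nndist x y} := fun x => by
    rw [Measure.restrict_restrict (measurableSet_le measurable_const (by fun_prop)), inter_comm]
    rfl
  have hcancel : β ^ (s - d - κ) * (c₀.toNNReal * β ^ κ *
      (C * 2 ^ d * (1 - 2 ^ (d - s))⁻¹ * (a * β) ^ (d - s))) =
      c₀.toNNReal * (C * 2 ^ d * (1 - 2 ^ (d - s))⁻¹ * a ^ (d - s)) := by
    have hβ_pow : β ^ (s - d - κ) * β ^ κ * β ^ (d - s) = 1 := by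
      rw [← NNReal.rpow_add hβ.ne', ← NNReal.rpow_add hβ.ne', sub_add_cancel, sub_add_sub_cancel,
        sub_self, NNReal.rpow_zero]
    rw [NNReal.mul_rpow]
    linear_combination c₀.toNNReal * (C * 2 ^ d * (1 - 2 ^ (d - s))⁻¹ * a ^ (d - s)) * hβ_pow
  simp only [hdomain]
  refine (mul_le_mul_right (hμ.lintegral_mul_setLIntegral_le hs hds (mul_pos ha hβ)
    hΦm.ennreal_ofReal hτ hkernel) _).trans_eq ?_
  rw [← NNReal.coe_rpow, ENNReal.ofReal_coe_nnreal, ← hcancel]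
  push_cast
  ring

end TruncatedRieszKernel

theorem stmt9_general {E : Type*} [NormedAddCommGroup E] [NormedSpace ℝ E]
    [FiniteDimensional ℝ E] [MeasurableSpace E] [BorelSpace E] {N : ℕ} (hE : finrank ℝ E = N)
    (hN : 1 ≤ N) (Ω : Set E) (hΩo : IsOpen Ω) (hΩb : Bornology.IsBounded Ω)
    (hΩ : HasStrictFDerivBoundary Ω) (a : ℝ) (ha : 0 < a) (α αs : ℝ) (hα : 0 < α - 1 / 2)
    (Φ : E → ℝ) (G : E → E → ℝ) (hΦm : Measurable Φ) (hΦ : ∀ x ∈ Ω, 0 ≤ Φ x) (c₀ β₁ : ℝ)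
    (hβ₁ : 0 < β₁)
    (hG : ∀ β ∈ Ioo 0 β₁, ∀ x ∈ Ω, infDist x (frontier Ω) = β → ∀ y ∈ Ω, a * β ≤ dist x y →
      Φ x * G x y ≤ c₀ * β ^ (2 * αs) * dist x y ^ ((2 : ℝ) - N - 2 * α) * Φ y) :
    ∃ C : ℝ, 0 < C ∧ ∃ β₂ : ℝ, 0 < β₂ ∧ β₂ ≤ β₁ ∧ ∀ τ : Measure E, ∀ β ∈ Ioo 0 β₂,
      ENNReal.ofReal (β ^ (-(2 * (αs - α) + 1))) *
          (∫⁻ x in {x ∈ Ω | infDist x (frontier Ω) = β}, ENNReal.ofReal (Φ x) *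
            (∫⁻ y in {y ∈ Ω | a * β ≤ dist x y}, ENNReal.ofReal (G x y) ∂τ) ∂μH[(N : ℝ) - 1]) ≤
        ENNReal.ofReal C * ∫⁻ y in Ω, ENNReal.ofReal (Φ y) ∂τ := by
  subst hE
  have := FiniteDimensional.proper_real E
  have hN' : (1 : ℝ) ≤ finrank ℝ E := mod_cast hN
  lift a to ℝ≥0 using ha.le
  obtain ⟨C, hC⟩ := hΩ.exists_isUpperAhlforsRegular hΩo hΩb
  obtain ⟨β₂, ⟨hβ₂, hβ₂₁⟩, hreg⟩ := (mem_nhdsGT_iff_exists_mem_Ioc_Ioo_subset hβ₁).1 hC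
  set d : ℝ := finrank ℝ E - 1 with hd
  set s : ℝ := d - 1 + 2 * α with hs
  set K : ℝ≥0 := c₀.toNNReal * (C * 2 ^ d * (1 - 2 ^ (d - s))⁻¹ * a ^ (d - s))
  refine ⟨K + 1, by positivity, β₂, hβ₂, hβ₂₁, fun τ β hβ => ?_⟩
  rcases eq_or_ne (∫⁻ y in Ω, ENNReal.ofReal (Φ y) ∂τ) ∞ with hτ | hτ
  · rw [hτ, ENNReal.mul_top (ENNReal.ofReal_pos.2 (by positivity)).ne']
    exact le_top
  lift β to ℝ≥0 using hβ.1.le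
  have hkernel_exponent : (2 : ℝ) - finrank ℝ E - 2 * α = -s := by rw [hs, hd]; ring
  have hscale_exponent : -(2 * (αs - α) + 1) = s - d - 2 * αs := by rw [hs]; ring
  rw [hscale_exponent]
  refine (ofReal_rpow_mul_setLIntegral_mul_setLIntegral_le (c₀ := c₀)
    (measurableSet_innerLevelSet hΩo.measurableSet β) hΩo.measurableSet (hreg hβ)
    (by linarith) (by linarith) (mod_cast ha) (mod_cast hβ.1) hΦm (fun x hx => hΦ x hx.1) hΦ hτ
    fun x hx y hy hxy => ?_).trans ?_
  · rw [← hkernel_exponent]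
    exact hG β ⟨hβ.1, hβ.2.trans_le hβ₂₁⟩ x hx.1 hx.2 y hy hxy
  · gcongr
    rw [← ENNReal.ofReal_coe_nnreal]
    exact ENNReal.ofReal_le_ofReal (le_add_of_nonneg_right zero_le_one)

theorem stmt9 {N : ℕ} (hN : 3 ≤ N) (Ω : Set (EuclideanSpace ℝ (Fin N)))
    (hΩo : IsOpen Ω) (hΩb : Bornology.IsBounded Ω) (hΩ2 : HasC2Boundary Ω)
    (a : ℝ) (ha : 2 ≤ a)
    (α αs : ℝ) (hα : 0 < α - 1/2) (hαs : α - 1/2 < αs) (hαs' : αs ≤ α)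
    (Φ : EuclideanSpace ℝ (Fin N) → ℝ)
    (G : EuclideanSpace ℝ (Fin N) → EuclideanSpace ℝ (Fin N) → ℝ)
    (hΦm : Measurable Φ) (hΦpos : ∀ x ∈ Ω, 0 < Φ x)
    (hGm : Measurable (Function.uncurry G))
    (hGpos : ∀ x ∈ Ω, ∀ y ∈ Ω, x ≠ y → 0 < G x y)
    (c₀ β₁ : ℝ) (hc₀ : 1 ≤ c₀) (hβ₁ : 0 < β₁)
    -- upper estimate of `Φ(x) G(x,y)` for `x ∈ Σ_β`, `|x-y| ≥ aβ`
    (hG : ∀ β ∈ Set.Ioo (0:ℝ) β₁, ∀ x ∈ Ω, Metric.infDist x (frontier Ω) = β →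
      ∀ y ∈ Ω, a * β ≤ dist x y →
        Φ x * G x y ≤ c₀ * β ^ (2 * αs) * dist x y ^ ((2:ℝ) - N - 2 * α) * Φ y) :
    ∃ C : ℝ, 0 < C ∧ ∃ β₂ : ℝ, 0 < β₂ ∧ β₂ ≤ β₁ ∧
      ∀ τ : Measure (EuclideanSpace ℝ (Fin N)), τ Ωᶜ = 0 →
        (∫⁻ x in Ω, ENNReal.ofReal (Φ x) ∂τ) < ⊤ →
        ∀ β ∈ Set.Ioo (0:ℝ) β₂,
          ENNReal.ofReal (β ^ (-(2 * (αs - α) + 1))) *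
              (∫⁻ x in {x ∈ Ω | Metric.infDist x (frontier Ω) = β},
                ENNReal.ofReal (Φ x) *
                  (∫⁻ y in {y ∈ Ω | a * β ≤ dist x y},
                    ENNReal.ofReal (G x y) ∂τ) ∂(μH[(N:ℝ) - 1])) ≤
            ENNReal.ofReal C * (∫⁻ y in Ω, ENNReal.ofReal (Φ y) ∂τ) := by
  obtain ⟨C, hC, β₂, hβ₂, hβ₂₁, h⟩ := stmt9_general finrank_euclideanSpace_fin (by omega) Ω hΩo hΩb
    hΩ2.hasStrictFDerivBoundary a (by linarith) α αs hα Φ G hΦm (fun x hx => (hΦpos x hx).le) c₀ β₁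
    hβ₁ hG
  exact ⟨C, hC, β₂, hβ₂, hβ₂₁, fun τ _ _ => h τ⟩
end

section
/- Let Ω ⊂ ℝ^N (N ≥ 3) be a bounded open set, δ(x) := dist(x, ∂Ω), Φ : Ω → (0,∞) continuous, and G : {(x,y) ∈ Ω × Ω : x ≠ y} → (0,∞) Borel measurable and symmetric, such that: (a) for every compact E ⊂ Ω there is c(E) ≥ 1 with c(E)⁻¹ |x−y|^{2−N} ≤ G(x,y) ≤ c(E) |x−y|^{2−N} for all distinct x, y ∈ E; (b) for every y₀ ∈ Ω there is C(y₀) ≥ 1 with C(y₀)⁻¹ G(x,y₀) ≤ Φ(x) ≤ C(y₀) G(x,y₀) whenever δ(x) < δ(y₀)/2. Let τ be a positive Borel measure on Ω that is finite on compact subsets of Ω. Then: if ∫_Ω Φ dτ = ∞, then ∫_Ω G(x,y) dτ(y) = ∞ for every x ∈ Ω; and if ∫_Ω Φ dτ < ∞, then ∫_Ω G(x,y) dτ(y) < ∞ for Lebesgue-almost every x ∈ Ω. In particular, G[τ] := ∫_Ω G(·,y) dτ(y) is finite almost everywhere if and only if ∫_Ω Φ dτ < ∞. -/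
open MeasureTheory Metric Set

/-!
Near `∂Ω` the functions `Φ` and `G x` are comparable, and what is left of `Ω` after removing a
neighbourhood of `∂Ω` is compact. So the integrals of `Φ` and of `G x` are simultaneously finite as
soon as both are finite over compact subsets of `Ω`. For `Φ` this is continuity. For `G x` it is
Tonelli's theorem for almost every `x`: the Newtonian kernel is locally integrable, hence its
convolution with a finite measure on a compact set is integrable over that set.
-/

open scoped ENNReal Pointwise

section MeasureSpace

variable {α : Type*} [MeasurableSpace α] {μ : Measure α}

lemma setLIntegral_lt_top_of_le_const_mul {s t : Set α} {f g : α → ℝ≥0∞} {c : ℝ≥0∞}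
    (hs : MeasurableSet s) (ht : MeasurableSet t) (hc : c < ⊤)
    (hfg : ∀ x ∈ s ∩ t, f x ≤ c * g x) (hf : ∫⁻ x in s \ t, f x ∂μ < ⊤)
    (hg : ∫⁻ x in s, g x ∂μ < ⊤) : ∫⁻ x in s, f x ∂μ < ⊤ := by
  have hst : ∫⁻ x in s ∩ t, f x ∂μ < ⊤ :=
    calc ∫⁻ x in s ∩ t, f x ∂μ
        ≤ ∫⁻ x in s ∩ t, c * g x ∂μ := setLIntegral_mono' (hs.inter ht) hfg
      _ = c * ∫⁻ x in s ∩ t, g x ∂μ := lintegral_const_mul' _ _ hc.ne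
      _ ≤ c * ∫⁻ x in s, g x ∂μ := by gcongr; exact inter_subset_left
      _ < ⊤ := ENNReal.mul_lt_top hc hg
  rw [← lintegral_inter_add_sdiff f s ht]
  exact ENNReal.add_lt_top.2 ⟨hst, hf⟩

lemma setLIntegral_lt_top_of_le_const_mul_of_ne [MeasurableSingletonClass α] {s : Set α}
    {f g : α → ℝ≥0∞} {c : ℝ≥0∞} {a : α} (hs : MeasurableSet s) (hc : c < ⊤)
    (hfg : ∀ x ∈ s, x ≠ a → f x ≤ c * g x) (hfa : f a < ⊤) (hμs : μ s < ⊤)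
    (hg : ∫⁻ x in s, g x ∂μ < ⊤) : ∫⁻ x in s, f x ∂μ < ⊤ := by
  refine setLIntegral_lt_top_of_le_const_mul hs (measurableSet_singleton a).compl hc
    (fun x hx => hfg x hx.1 hx.2) ?_ hg
  calc ∫⁻ x in s \ {a}ᶜ, f x ∂μ
      ≤ ∫⁻ _ in s \ {a}ᶜ, f a ∂μ :=
        setLIntegral_mono' (hs.diff (measurableSet_singleton a).compl) fun x hx => by
          rw [mem_singleton_iff.1 (notMem_compl_iff.1 hx.2)]
    _ = f a * μ (s \ {a}ᶜ) := setLIntegral_const _ _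
    _ < ⊤ := ENNReal.mul_lt_top hfa ((measure_mono sdiff_subset).trans_lt hμs)

end MeasureSpace

section Frontier

variable {X : Type*} [PseudoMetricSpace X]

lemma isCompact_sdiff_thickening_frontier [ProperSpace X] {s : Set X}
    (hs : Bornology.IsBounded s) {r : ℝ} (hr : 0 < r) :
    IsCompact (s \ thickening r (frontier s)) := by
  have h : closure s \ thickening r (frontier s) = s \ thickening r (frontier s) := by
    rw [closure_eq_self_union_frontier, union_sdiff_distrib,
      sdiff_eq_empty.2 (self_subset_thickening hr _), union_empty]
  exact h ▸ hs.isCompact_closure.diff isOpen_thickening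

lemma exists_subset_sdiff_thickening_frontier {s K : Set X}
    (hs : IsOpen s) (hK : IsCompact K) (hKs : K ⊆ s) :
    ∃ r > 0, K ⊆ s \ thickening r (frontier s) := by
  have hdisj : Disjoint K (frontier s) :=
    (disjoint_iff_inter_eq_empty.2 hs.inter_frontier_eq).mono_left hKs
  obtain ⟨r, hr, h⟩ := hdisj.exists_thickenings hK isClosed_frontier
  exact ⟨r, hr, subset_sdiff.2 ⟨hKs, h.mono_left (self_subset_thickening hr K)⟩⟩

lemma infDist_frontier_pos [ProperSpace X] [PreconnectedSpace X]
    [NoncompactSpace X] {s : Set X} (hs : IsOpen s) (hsb : Bornology.IsBounded s) {x : X}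
    (hx : x ∈ s) : 0 < infDist x (frontier s) := by
  have hs_univ : s ≠ univ := fun h =>
    noncompact_univ X (isCompact_of_isClosed_isBounded isClosed_univ (h ▸ hsb))
  have hne : (frontier s).Nonempty := nonempty_frontier_iff.2 ⟨⟨x, hx⟩, hs_univ⟩
  have hx_frontier : x ∉ frontier s :=
    disjoint_left.1 (disjoint_iff_inter_eq_empty.2 hs.inter_frontier_eq) hx
  exact (isClosed_frontier.notMem_iff_infDist_pos hne).1 hx_frontier

lemma ae_restrict_forall_isCompact_setLIntegral_lt_top [ProperSpace X]
    [MeasurableSpace X] [OpensMeasurableSpace X] {μ τ : Measure X} {Ω : Set X}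
    {f : X → X → ℝ≥0∞} (hΩo : IsOpen Ω) (hΩb : Bornology.IsBounded Ω)
    (hf : ∀ K ⊆ Ω, IsCompact K → ∀ᵐ x ∂μ.restrict K, ∫⁻ y in K, f x y ∂τ < ⊤) :
    ∀ᵐ x ∂μ.restrict Ω, ∀ K ⊆ Ω, IsCompact K → ∫⁻ y in K, f x y ∂τ < ⊤ := by
  let L (n : ℕ) : Set X := Ω \ thickening (1 / ((n : ℝ) + 1)) (frontier Ω)
  have hL : ∀ᵐ x ∂μ, ∀ n, x ∈ L n → ∫⁻ y in L n, f x y ∂τ < ⊤ := ae_all_iff.2 fun n =>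
    (ae_restrict_iff' (hΩo.measurableSet.diff isOpen_thickening.measurableSet)).1
      (hf (L n) sdiff_subset
        (isCompact_sdiff_thickening_frontier hΩb Nat.one_div_pos_of_nat))
  filter_upwards [ae_restrict_of_ae hL, ae_restrict_mem hΩo.measurableSet] with x hLx hx K hKΩ hK
  obtain ⟨r, hr, hKr⟩ := exists_subset_sdiff_thickening_frontier hΩo (hK.insert x)
    (insert_subset hx hKΩ)
  obtain ⟨n, hn⟩ := exists_nat_one_div_lt hr
  have hKL : insert x K ⊆ L n := hKr.trans (sdiff_subset_sdiff_right (thickening_mono hn.le _))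
  exact (lintegral_mono_set ((subset_insert x K).trans hKL)).trans_lt
    (hLx n (hKL (mem_insert x K)))

end Frontier

section Domination

variable {X : Type*} [PseudoMetricSpace X] {Ω : Set X} {f g : X → ℝ}

/-- Domination `f ≲ g` near the boundary of `Ω`: up to a constant, `f` is at most `g` at the points
of `Ω` within some positive distance of `∂Ω`. Hypothesis (b) says that each of `Φ` and `G x`
dominates the other. -/
def DominatedNearFrontier (Ω : Set X) (f g : X → ℝ) : Prop :=
  ∃ C, 0 ≤ C ∧ ∃ r, 0 < r ∧ ∀ y ∈ Ω ∩ thickening r (frontier Ω), f y ≤ C * g y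

lemma DominatedNearFrontier.of_infDist_lt {C r : ℝ} (hC : 0 ≤ C) (hr : 0 < r)
    (h : ∀ y ∈ Ω, infDist y (frontier Ω) < r → f y ≤ C * g y) : DominatedNearFrontier Ω f g := by
  refine ⟨C, hC, r, hr, fun y ⟨hyΩ, hy⟩ => h y hyΩ ?_⟩
  obtain ⟨z, hz, hyz⟩ := mem_thickening_iff.1 hy
  exact (infDist_le_dist_of_mem hz).trans_lt hyz

lemma dominatedNearFrontier_and_of_symm_of_infDist_lt {Φ : X → ℝ} {G : X → X → ℝ} {x : X} {r : ℝ}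
    (hr : 0 < r) (hGsym : ∀ y ∈ Ω, G y x = G x y)
    (h : ∃ C, 1 ≤ C ∧ ∀ y ∈ Ω, infDist y (frontier Ω) < r →
      C⁻¹ * G y x ≤ Φ y ∧ Φ y ≤ C * G y x) :
    DominatedNearFrontier Ω Φ (G x) ∧ DominatedNearFrontier Ω (G x) Φ := by
  obtain ⟨C, hC1, h⟩ := h
  have hC : 0 < C := zero_lt_one.trans_le hC1
  constructor <;> refine .of_infDist_lt hC.le hr fun y hy hyr => ?_ <;> rw [← hGsym y hy]
  · exact (h y hy hyr).2
  · exact (inv_mul_le_iff₀ hC).1 (h y hy hyr).1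

theorem DominatedNearFrontier.setLIntegral_lt_top [ProperSpace X] [MeasurableSpace X]
    [OpensMeasurableSpace X] {τ : Measure X} (h : DominatedNearFrontier Ω f g) (hΩo : IsOpen Ω)
    (hΩb : Bornology.IsBounded Ω)
    (hf : ∀ K ⊆ Ω, IsCompact K → ∫⁻ y in K, ENNReal.ofReal (f y) ∂τ < ⊤)
    (hg : ∫⁻ y in Ω, ENNReal.ofReal (g y) ∂τ < ⊤) :
    ∫⁻ y in Ω, ENNReal.ofReal (f y) ∂τ < ⊤ := by
  obtain ⟨C, hC, r, hr, hfg⟩ := h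
  refine setLIntegral_lt_top_of_le_const_mul (c := ENNReal.ofReal C) hΩo.measurableSet
    isOpen_thickening.measurableSet ENNReal.ofReal_lt_top (fun y hy => ?_)
    (hf _ sdiff_subset (isCompact_sdiff_thickening_frontier hΩb hr)) hg
  rw [← ENNReal.ofReal_mul hC]
  exact ENNReal.ofReal_le_ofReal (hfg y hy)

end Domination

section Convolution

lemma ae_restrict_setLIntegral_sub_lt_top {E : Type*} [AddGroup E] [TopologicalSpace E]
    [IsTopologicalAddGroup E] [T2Space E] [SecondCountableTopology E] [MeasurableSpace E]
    [BorelSpace E] {μ τ : Measure E} [SFinite μ] [μ.IsAddRightInvariant] {k : E → ℝ≥0∞}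
    (hkm : Measurable k) (hk : ∀ K, IsCompact K → ∫⁻ z in K, k z ∂μ < ⊤) {K : Set E}
    (hK : IsCompact K) (hτK : τ K < ⊤) :
    ∀ᵐ x ∂μ.restrict K, ∫⁻ y in K, k (x - y) ∂τ < ⊤ := by
  have : IsFiniteMeasure (τ.restrict K) := isFiniteMeasure_restrict.2 hτK.ne
  have hm : Measurable (Function.uncurry fun x y => k (x - y)) := hkm.comp measurable_sub
  have hKK : IsCompact (K - K) := sub_eq_add_neg K K ▸ hK.add hK.neg
  have htranslate : ∀ y ∈ K, ∫⁻ x in K, k (x - y) ∂μ ≤ ∫⁻ z in K - K, k z ∂μ := fun y hy =>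
    calc ∫⁻ x in K, k (x - y) ∂μ
        ≤ ∫⁻ x in (· - y) ⁻¹' (K - K), k (x - y) ∂μ :=
          lintegral_mono_set fun x hx => sub_mem_sub hx hy
      _ = ∫⁻ z in K - K, k z ∂μ :=
          (measurePreserving_sub_right μ y).setLIntegral_comp_preimage hKK.measurableSet hkm
  refine ae_lt_top hm.lintegral_prod_right' (ne_of_lt ?_)
  calc ∫⁻ x in K, ∫⁻ y in K, k (x - y) ∂τ ∂μ
      = ∫⁻ y in K, ∫⁻ x in K, k (x - y) ∂μ ∂τ := lintegral_lintegral_swap hm.aemeasurable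
    _ ≤ ∫⁻ _ in K, ∫⁻ z in K - K, k z ∂μ ∂τ := setLIntegral_mono' hK.measurableSet htranslate
    _ = (∫⁻ z in K - K, k z ∂μ) * τ K := setLIntegral_const _ _
    _ < ⊤ := ENNReal.mul_lt_top (hk _ hKK) hτK

lemma locallyIntegrable_norm_rpow {E : Type*} [NormedAddCommGroup E] [NormedSpace ℝ E]
    [FiniteDimensional ℝ E] [Nontrivial E] [MeasurableSpace E] [BorelSpace E] (μ : Measure E)
    [μ.IsAddHaarMeasure] {s : ℝ} (hs : -(Module.finrank ℝ E : ℝ) < s) :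
    LocallyIntegrable (fun x : E => ‖x‖ ^ s) μ := by
  refine locallyIntegrable_of_norm_le_rpow (C := 1) Module.finrank_pos (neg_lt.1 hs)
    (.of_forall fun x => ?_) (measurable_norm.pow_const s).aestronglyMeasurable
  rw [neg_neg, one_mul, Real.norm_of_nonneg (by positivity)]

end Convolution

section Green

variable {E : Type*} [NormedAddCommGroup E] [ProperSpace E] [MeasurableSpace E] [BorelSpace E]
  {μ τ : Measure E} [μ.IsAddHaarMeasure] {G : E → E → ℝ} {k : E → ℝ}

lemma ae_restrict_setLIntegral_lt_top_of_le_sub (hkm : Measurable k) (hk : LocallyIntegrable k μ)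
    {K : Set E} (hK : IsCompact K) (hτK : τ K < ⊤) {c : ℝ}
    (hG : ∀ x ∈ K, ∀ y ∈ K, x ≠ y → G x y ≤ c * k (x - y)) :
    ∀ᵐ x ∂μ.restrict K, ∫⁻ y in K, ENNReal.ofReal (G x y) ∂τ < ⊤ := by
  have hpotential : ∀ᵐ x ∂μ.restrict K, ∫⁻ y in K, ‖k (x - y)‖ₑ ∂τ < ⊤ :=
    ae_restrict_setLIntegral_sub_lt_top hkm.enorm
      (fun L hL => (hk.integrableOn_isCompact hL).hasFiniteIntegral) hK hτK
  filter_upwards [hpotential, ae_restrict_mem hK.measurableSet] with x hpot hx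
  -- Nothing is known of `G` on the diagonal, where `τ` may have an atom.
  refine setLIntegral_lt_top_of_le_const_mul_of_ne (a := x) (c := ‖c‖ₑ) hK.measurableSet
    enorm_lt_top (fun y hy hyx => ?_) ENNReal.ofReal_lt_top hτK hpot
  calc ENNReal.ofReal (G x y)
      ≤ ENNReal.ofReal (c * k (x - y)) := ENNReal.ofReal_le_ofReal (hG x hx y hy hyx.symm)
    _ ≤ ‖c * k (x - y)‖ₑ := Real.ofReal_le_enorm _
    _ = ‖c‖ₑ * ‖k (x - y)‖ₑ := enorm_mul _ _

theorem stmt10_general {Ω : Set E} {Φ : E → ℝ} (hΩo : IsOpen Ω) (hΩb : Bornology.IsBounded Ω)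
    (hΦc : ContinuousOn Φ Ω) (hkm : Measurable k) (hk : LocallyIntegrable k μ)
    (hGk : ∀ K ⊆ Ω, IsCompact K →
      ∃ c, ∀ x ∈ K, ∀ y ∈ K, x ≠ y → G x y ≤ c * k (x - y))
    (hGΦ : ∀ x ∈ Ω, DominatedNearFrontier Ω Φ (G x) ∧ DominatedNearFrontier Ω (G x) Φ)
    (hτloc : ∀ K ⊆ Ω, IsCompact K → τ K < ⊤) :
    (∫⁻ x in Ω, ENNReal.ofReal (Φ x) ∂τ = ⊤ →
      ∀ x ∈ Ω, ∫⁻ y in Ω, ENNReal.ofReal (G x y) ∂τ = ⊤) ∧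
    (∫⁻ x in Ω, ENNReal.ofReal (Φ x) ∂τ < ⊤ →
      ∀ᵐ x ∂μ.restrict Ω, ∫⁻ y in Ω, ENNReal.ofReal (G x y) ∂τ < ⊤) := by
  have hΦ_loc : ∀ K ⊆ Ω, IsCompact K → ∫⁻ y in K, ENNReal.ofReal (Φ y) ∂τ < ⊤ :=
    fun K hKΩ hK => ((hΦc.mono hKΩ).integrableOn_of_subset_isCompact hK hK.measurableSet
      Subset.rfl (hτloc K hKΩ hK).ne).lintegral_lt_top
  have hG_loc : ∀ᵐ x ∂μ.restrict Ω, ∀ K ⊆ Ω, IsCompact K →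
      ∫⁻ y in K, ENNReal.ofReal (G x y) ∂τ < ⊤ :=
    ae_restrict_forall_isCompact_setLIntegral_lt_top hΩo hΩb fun K hKΩ hK =>
      let ⟨_, hc⟩ := hGk K hKΩ hK
      ae_restrict_setLIntegral_lt_top_of_le_sub hkm hk hK (hτloc K hKΩ hK) hc
  constructor
  · intro hΦ x hx
    contrapose! hΦ
    exact ((hGΦ x hx).1.setLIntegral_lt_top hΩo hΩb hΦ_loc hΦ.lt_top).ne
  · intro hΦ
    filter_upwards [hG_loc, ae_restrict_mem hΩo.measurableSet] with x hGx hx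
    exact (hGΦ x hx).2.setLIntegral_lt_top hΩo hΩb hGx hΦ

end Green

theorem stmt10 {N : ℕ} (hN : 3 ≤ N) (Ω : Set (EuclideanSpace ℝ (Fin N)))
    (hΩo : IsOpen Ω) (hΩb : Bornology.IsBounded Ω)
    (Φ : EuclideanSpace ℝ (Fin N) → ℝ)
    (G : EuclideanSpace ℝ (Fin N) → EuclideanSpace ℝ (Fin N) → ℝ)
    (hΦc : ContinuousOn Φ Ω) (hΦpos : ∀ x ∈ Ω, 0 < Φ x)
    (hGm : Measurable (Function.uncurry G))
    (hGpos : ∀ x ∈ Ω, ∀ y ∈ Ω, x ≠ y → 0 < G x y)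
    (hGsym : ∀ x ∈ Ω, ∀ y ∈ Ω, G x y = G y x)
    -- (a): interior two-sided Green estimate on compact subsets of `Ω`
    (hGa : ∀ E : Set (EuclideanSpace ℝ (Fin N)), E ⊆ Ω → IsCompact E →
      ∃ cE : ℝ, 1 ≤ cE ∧ ∀ x ∈ E, ∀ y ∈ E, x ≠ y →
        cE⁻¹ * dist x y ^ ((2:ℝ) - N) ≤ G x y ∧ G x y ≤ cE * dist x y ^ ((2:ℝ) - N))
    -- (b): comparison of the Green kernel with the ground state near the boundary
    (hGb : ∀ y₀ ∈ Ω, ∃ Cy : ℝ, 1 ≤ Cy ∧ ∀ x ∈ Ω,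
      Metric.infDist x (frontier Ω) < Metric.infDist y₀ (frontier Ω) / 2 →
      Cy⁻¹ * G x y₀ ≤ Φ x ∧ Φ x ≤ Cy * G x y₀)
    (τ : Measure (EuclideanSpace ℝ (Fin N))) (hτ : τ Ωᶜ = 0)
    (hτloc : ∀ E : Set (EuclideanSpace ℝ (Fin N)), E ⊆ Ω → IsCompact E → τ E < ⊤) :
    ((∫⁻ x in Ω, ENNReal.ofReal (Φ x) ∂τ) = ⊤ →
      ∀ x ∈ Ω, (∫⁻ y in Ω, ENNReal.ofReal (G x y) ∂τ) = ⊤) ∧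
    ((∫⁻ x in Ω, ENNReal.ofReal (Φ x) ∂τ) < ⊤ →
      ∀ᵐ x ∂(volume.restrict Ω), (∫⁻ y in Ω, ENNReal.ofReal (G x y) ∂τ) < ⊤) := by
  have : NeZero N := ⟨by omega⟩
  exact stmt10_general hΩo hΩb hΦc (measurable_norm.pow_const ((2 : ℝ) - N))
    (locallyIntegrable_norm_rpow volume (by rw [finrank_euclideanSpace_fin]; linarith))
    (fun K hKΩ hK => (hGa K hKΩ hK).imp fun c hc x hx y hy hxy =>
      dist_eq_norm x y ▸ (hc.2 x hx y hy hxy).2)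
    (fun x hx => dominatedNearFrontier_and_of_symm_of_infDist_lt
      (half_pos (infDist_frontier_pos hΩo hΩb hx)) (fun y hy => hGsym y hy x hx) (hGb x hx))
    hτloc
end

section
/- Let Ω ⊂ ℝ^N (N ≥ 3) be a bounded open set with C² boundary and δ(x) := dist(x, ∂Ω). For every a ≥ 2 there exist constants c ≥ 1 and β₀ > 0 such that for every β ∈ (0,β₀) and every y ∈ Ω with δ(y) ≤ (a/2)β: ∫_{Σ_β ∩ {x : |x−y| < aβ}} |x−y|^{2−N} dH^{N−1}(x) ≥ β/c. -/
open MeasureTheory Metric Set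

/-!
Let `y ∈ Ω`, let `p` be a frontier point nearest to `y`, and let `e` be the unit vector from `p`
towards `y`. For a `C¹` boundary, `Ω` and its complement contain, near `p`, opposite cones of
arbitrarily wide aperture, uniformly in `p`; since the ball around `y` through `p` lies in `Ω`, the
axis of these cones is nearly `e`. Hence on each line parallel to `e` that passes close enough to
`p`, the distance to the complement of `Ω` takes the value `β` at height about `β`. The level set
within distance `a * β` of `y` therefore projects along `e` onto an `(N - 1)`-dimensional ball of
radius comparable to `β`, which bounds its Hausdorff measure below by a multiple of `β ^ (N - 1)`,
while the integrand is at least `(a * β) ^ (2 - N)` there.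
-/

open Filter Module
open scoped Topology RealInnerProductSpace

theorem ne_univ_of_isBounded {E : Type*} [NormedAddCommGroup E] [NormedSpace ℝ E] [Nontrivial E]
    {Ω : Set E} (hΩ : Bornology.IsBounded Ω) : Ω ≠ univ := fun h =>
  NormedSpace.unbounded_univ ℝ E (h ▸ hΩ)

theorem isCompact_frontier_of_isBounded {X : Type*} [PseudoMetricSpace X] [ProperSpace X]
    {Ω : Set X} (hΩ : Bornology.IsBounded Ω) : IsCompact (frontier Ω) :=
  hΩ.isCompact_closure.of_isClosed_subset isClosed_frontier frontier_subset_closure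

section Distance

variable {E : Type*} [NormedAddCommGroup E] [NormedSpace ℝ E] [FiniteDimensional ℝ E] {Ω : Set E}

theorem infDist_frontier_eq_infDist_compl (hΩ : IsOpen Ω) (hΩu : Ω ≠ univ) {x : E} (hx : x ∈ Ω) :
    infDist x (frontier Ω) = infDist x Ωᶜ := by
  obtain ⟨p, hp, hxp⟩ := exists_mem_frontier_infDist_compl_eq_dist hx hΩu
  refine le_antisymm (hxp ▸ infDist_le_dist_of_mem hp) (infDist_le_infDist_of_subset ?_ ⟨p, hp⟩)
  exact (disjoint_frontier_iff_isOpen.2 hΩ).subset_compl_right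

theorem setOf_infDist_compl_eq_subset (hΩ : IsOpen Ω) (hΩu : Ω ≠ univ) {β : ℝ} (hβ : 0 < β) :
    {x | infDist x Ωᶜ = β} ⊆ {x ∈ Ω | infDist x (frontier Ω) = β} := by
  intro x (hx : infDist x Ωᶜ = β)
  have hxΩ : x ∈ Ω := notMem_compl_iff.1 fun h => by
    rw [infDist_zero_of_mem h] at hx
    exact hβ.ne hx
  exact ⟨hxΩ, (infDist_frontier_eq_infDist_compl hΩ hΩu hxΩ).trans hx⟩

end Distance

section Cones

variable {E : Type*} [NormedAddCommGroup E] [InnerProductSpace ℝ E]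
  {ε ε' r r' : ℝ} {Ω : Set E} {p n e : E}

/-- The set `Ω` contains, apart from the vertex, the open cone with vertex `p` and axis `n`
truncated at radius `r`. The aperture is encoded by `ε`, the cosine of the half-angle when `n` is a
unit vector: small `ε` means a cone close to a half-ball. -/
def ContainsCone (Ω : Set E) (ε r : ℝ) (p n : E) : Prop :=
  ∀ w, ‖w‖ < r → ε * ‖w‖ < ⟪n, w⟫ → p + w ∈ Ω

namespace ContainsCone

theorem mono (h : ContainsCone Ω ε r p n) (hε : ε ≤ ε') (hr : r' ≤ r) :
    ContainsCone Ω ε' r' p n := fun w hw hnw =>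
  h w (hw.trans_le hr) ((mul_le_mul_of_nonneg_right hε (norm_nonneg w)).trans_lt hnw)

theorem change_axis (h : ContainsCone Ω ε r p n) (e : E) :
    ContainsCone Ω (ε + ‖n - e‖) r p e := by
  refine fun w hw hew => h w hw ?_
  have hdiff : -(‖n - e‖ * ‖w‖) ≤ ⟪n, w⟫ - ⟪e, w⟫ :=
    inner_sub_left (𝕜 := ℝ) n e w ▸ neg_le_of_abs_le (abs_real_inner_le_norm _ _)
  linarith

theorem ball_subset (h : ContainsCone Ω ε r p e) (he : ‖e‖ = 1) (hε : 0 ≤ ε) {t : ℝ}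
    (ht : 0 ≤ t) (htr : 2 * t ≤ r) : ball (p + t • e) ((1 - 2 * ε) * t) ⊆ Ω := by
  intro x hx
  obtain ⟨u, rfl⟩ : ∃ u, x = p + (t • e + u) := ⟨x - p - t • e, by abel⟩
  have hu : ‖u‖ < (1 - 2 * ε) * t := by simpa [dist_eq_norm, ← add_assoc] using hx
  have hnorm : ‖t • e + u‖ ≤ t + ‖u‖ := by
    simpa [norm_smul, he, abs_of_nonneg ht] using norm_add_le (t • e) u
  have hinner : t - ‖u‖ ≤ ⟪e, t • e + u⟫ := by
    have heu : -‖u‖ ≤ ⟪e, u⟫ := by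
      simpa [he] using neg_le_of_abs_le (abs_real_inner_le_norm e u)
    rw [inner_add_right, real_inner_smul_right, real_inner_self_eq_norm_sq, he]
    linarith
  have hεt : 0 ≤ ε * t := mul_nonneg hε ht
  have hnorm' : ‖t • e + u‖ ≤ 2 * t := by linarith
  refine h _ (by linarith) ?_
  linarith [mul_le_mul_of_nonneg_left hnorm' hε]

end ContainsCone

theorem eventually_add_smul_mem_of_ball_subset {y w : E} (hball : ball y (dist y p) ⊆ Ω)
    (hw : 0 < ⟪y - p, w⟫) : ∀ᶠ s : ℝ in 𝓝[>] 0, p + s • w ∈ Ω := by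
  have hw0 : 0 < ‖w‖ ^ 2 := by
    have : w ≠ 0 := by rintro rfl; simp at hw
    positivity
  filter_upwards [Ioo_mem_nhdsGT (show 0 < 2 * ⟪y - p, w⟫ / ‖w‖ ^ 2 by positivity)]
    with s ⟨hs, hs'⟩
  rw [lt_div_iff₀ hw0] at hs'
  have hsub : p + s • w - y = s • w - (y - p) := by abel
  refine hball ?_
  rw [mem_ball, dist_eq_norm, dist_eq_norm, hsub, ← sq_lt_sq₀ (norm_nonneg _) (norm_nonneg _),
    norm_sub_sq_real, norm_smul, mul_pow, Real.norm_eq_abs, sq_abs, real_inner_smul_left,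
    real_inner_comm]
  linarith [mul_lt_mul_of_pos_left hs' hs]

theorem ContainsCone.norm_sub_le_of_ball_subset (h : ContainsCone Ωᶜ ε r p (-n)) (hε : 0 ≤ ε)
    (hr : 0 < r) (hn : ‖n‖ = 1) (he : ‖e‖ = 1) {δ : ℝ} (hδ : 0 < δ)
    (hball : ball (p + δ • e) δ ⊆ Ω) : ‖n - e‖ ≤ 2 * ε := by
  by_contra! hlt
  have hpos : 0 < ‖n - e‖ := by linarith
  have hsq : ‖n - e‖ ^ 2 = 2 * (1 - ⟪n, e⟫) := by
    rw [norm_sub_sq_real, hn, he]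
    ring
  -- `e - n` points into the interior ball and, if `e` is far from `n`, also into the exterior cone.
  have hin : ∀ᶠ s : ℝ in 𝓝[>] 0, p + s • (e - n) ∈ Ω := by
    refine eventually_add_smul_mem_of_ball_subset (y := p + δ • e) ?_ ?_
    · simpa [norm_smul, he, abs_of_pos hδ] using hball
    · rw [add_sub_cancel_left, real_inner_smul_left, inner_sub_right, real_inner_self_eq_norm_sq,
        he, real_inner_comm]
      have : 0 < ‖n - e‖ ^ 2 := by positivity
      exact mul_pos hδ (by linarith)
  have hnear : ∀ᶠ s : ℝ in 𝓝[>] 0, ‖s • (e - n)‖ < r := by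
    have hcont : Continuous fun s : ℝ => ‖s • (e - n)‖ := by fun_prop
    exact nhdsWithin_le_nhds (hcont.continuousAt.eventually_lt_const (by simpa using hr))
  obtain ⟨s, ⟨hsΩ, hsr⟩, hs : 0 < s⟩ := ((hin.and hnear).and self_mem_nhdsWithin).exists
  refine h _ hsr ?_ hsΩ
  rw [norm_smul, Real.norm_of_nonneg hs.le, norm_sub_rev, real_inner_smul_right, inner_neg_left,
    inner_sub_right, real_inner_self_eq_norm_sq, hn]
  have : ε * ‖n - e‖ < ‖n - e‖ ^ 2 / 2 := by nlinarith
  nlinarith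

end Cones

section C1Boundary

variable {E : Type*} [NormedAddCommGroup E] [InnerProductSpace ℝ E] {Ω : Set E} {f : E → ℝ}

/-- The set `Ω` has `C¹` boundary: near each boundary point it is the strict sublevel set
of a `C¹` function whose derivative does not vanish there. This weakening of `HasC2Boundary` is
stated at single points, since both conditions on the function persist nearby. -/
def HasC1Boundary (Ω : Set E) : Prop :=
  ∀ p ∈ frontier Ω, ∃ f : E → ℝ,
    ContDiffAt ℝ 1 f p ∧ fderiv ℝ f p ≠ 0 ∧ ∀ᶠ x in 𝓝 p, x ∈ Ω ↔ f x < 0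

theorem HasC2Boundary.hasC1Boundary {N : ℕ} {Ω : Set (EuclideanSpace ℝ (Fin N))}
    (h : HasC2Boundary Ω) : HasC1Boundary Ω := by
  intro p hp
  obtain ⟨U, f, hU, hpU, hf, hf', hΩU⟩ := h p hp
  refine ⟨f, (hf.contDiffAt (hU.mem_nhds hpU)).of_le one_le_two, hf' p hpU, ?_⟩
  filter_upwards [hU.mem_nhds hpU] with x hx
  have := Set.ext_iff.1 hΩU x
  simpa [hx] using this

theorem eq_zero_of_mem_frontier_of_eventually_mem_iff {X : Type*} [TopologicalSpace X] {Ω : Set X}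
    (hΩ : IsOpen Ω) {f : X → ℝ} {p : X} (hf : ContinuousAt f p)
    (hΩf : ∀ᶠ x in 𝓝 p, x ∈ Ω ↔ f x < 0) (hp : p ∈ frontier Ω) : f p = 0 := by
  have hpΩ : p ∉ Ω := disjoint_left.1 (disjoint_frontier_iff_isOpen.2 hΩ) hp
  have hneg : ∃ᶠ x in 𝓝 p, f x ≤ 0 :=
    ((mem_closure_iff_frequently.1 hp.1).and_eventually hΩf).mono fun x hx => (hx.2.1 hx.1).le
  exact le_antisymm (le_of_tendsto_of_frequently hf hneg)
    (not_lt.1 fun h => hpΩ (hΩf.self_of_nhds.2 h))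

theorem exists_norm_eq_one_forall_apply_eq_neg_inner [CompleteSpace E] {L : E →L[ℝ] ℝ}
    (hL : L ≠ 0) : ∃ n : E, ‖n‖ = 1 ∧ ∀ w, L w = -(‖L‖ * ⟪n, w⟫) := by
  have hL' : ‖L‖ ≠ 0 := norm_ne_zero_iff.2 hL
  refine ⟨-(‖L‖⁻¹ • (InnerProductSpace.toDual ℝ E).symm L), ?_, fun w => ?_⟩
  · simp [norm_smul, hL']
  · simp [inner_neg_left, real_inner_smul_left, hL']

theorem exists_pos_eventually_forall_mem_ball {X : Type*} [PseudoMetricSpace X] {P : X → X → Prop}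
    {x₀ : X} (h : ∀ᶠ z : X × X in 𝓝 (x₀, x₀), P z.1 z.2) :
    ∃ r > 0, ∀ᶠ p in 𝓝 x₀, ∀ x ∈ ball p r, P p x := by
  obtain ⟨R, hR, hP⟩ := Metric.eventually_nhds_iff.1 h
  refine ⟨R / 2, half_pos hR, ?_⟩
  filter_upwards [ball_mem_nhds x₀ (half_pos hR)] with p hp x hx
  refine hP (y := (p, x)) (max_lt ?_ ?_)
  · exact (mem_ball.1 hp).trans (half_lt_self hR)
  · linarith [dist_triangle x p x₀, mem_ball.1 hp, mem_ball.1 hx]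

theorem exists_pos_eventually_abs_sub_fderiv_le {p₀ : E} (hf : ContDiffAt ℝ 1 f p₀)
    {η : ℝ} (hη : 0 < η) : ∃ r > 0, ∀ᶠ p in 𝓝 p₀, ∀ x ∈ ball p r,
      |f x - f p - fderiv ℝ f p₀ (x - p)| ≤ η * ‖x - p‖ := by
  refine exists_pos_eventually_forall_mem_ball ?_
  have hswap : Tendsto Prod.swap (𝓝 (p₀, p₀)) (𝓝 (p₀, p₀)) := continuous_swap.tendsto _
  exact hswap.eventually ((hf.hasStrictFDerivAt one_ne_zero).isLittleO.bound hη)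

theorem exists_containsCone_nhdsWithin_frontier [CompleteSpace E] (hΩ : IsOpen Ω) {p₀ : E}
    (hf : ContDiffAt ℝ 1 f p₀) (hf' : fderiv ℝ f p₀ ≠ 0) (hΩf : ∀ᶠ x in 𝓝 p₀, x ∈ Ω ↔ f x < 0)
    {ε : ℝ} (hε : 0 < ε) : ∃ n : E, ‖n‖ = 1 ∧ ∃ r > 0, ∀ᶠ p in 𝓝[frontier Ω] p₀,
      ContainsCone Ω ε r p n ∧ ContainsCone Ωᶜ ε r p (-n) := by
  obtain ⟨n, hn, hLn⟩ := exists_norm_eq_one_forall_apply_eq_neg_inner hf'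
  set l := ‖fderiv ℝ f p₀‖
  have hl : 0 < l := norm_pos_iff.2 hf'
  have hzero : ∀ᶠ p in 𝓝 p₀, p ∈ frontier Ω → f p = 0 := by
    filter_upwards [hf.eventually (by simp), hΩf.eventually_nhds] with p hfp hΩp
    exact eq_zero_of_mem_frontier_of_eventually_mem_iff hΩ hfp.continuousAt hΩp
  obtain ⟨r₁, hr₁, happrox⟩ := exists_pos_eventually_abs_sub_fderiv_le hf (mul_pos hε hl)
  obtain ⟨r₂, hr₂, hmem⟩ := exists_pos_eventually_forall_mem_ball
    (P := fun _ x => x ∈ Ω ↔ f x < 0) (continuous_snd.tendsto (p₀, p₀) |>.eventually hΩf)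
  refine ⟨n, hn, min r₁ r₂, lt_min hr₁ hr₂, ?_⟩
  filter_upwards [nhdsWithin_le_nhds hzero, nhdsWithin_le_nhds happrox, nhdsWithin_le_nhds hmem,
    self_mem_nhdsWithin] with p hzero happrox hmem hp
  have key : ∀ w, ‖w‖ < min r₁ r₂ →
      (p + w ∈ Ω ↔ f (p + w) < 0) ∧ |f (p + w) + l * ⟪n, w⟫| ≤ l * (ε * ‖w‖) := by
    intro w hw
    obtain ⟨hw₁, hw₂⟩ := lt_min_iff.1 hw
    have hfw := happrox (p + w) (by simpa using hw₁)
    rw [hzero hp, add_sub_cancel_left, hLn, sub_zero, sub_neg_eq_add] at hfw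
    exact ⟨hmem _ (by simpa using hw₂), hfw.trans_eq (by ring)⟩
  refine ⟨fun w hw hnw => (key w hw).1.2 ?_, fun w hw hnw hΩw => ?_⟩
  · linarith [(abs_le.1 (key w hw).2).2, mul_lt_mul_of_pos_left hnw hl]
  · rw [inner_neg_left] at hnw
    linarith [(abs_le.1 (key w hw).2).1, mul_lt_mul_of_pos_left hnw hl, (key w hw).1.1 hΩw]

theorem HasC1Boundary.exists_containsCone_of_ball_subset [CompleteSpace E]
    (hΩ1 : HasC1Boundary Ω) (hΩ : IsOpen Ω) (hΩc : IsCompact (frontier Ω)) {ε : ℝ} (hε : 0 < ε) :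
    ∃ r > 0, ∀ p ∈ frontier Ω, ∀ e : E, ‖e‖ = 1 → ∀ δ > 0, ball (p + δ • e) δ ⊆ Ω →
      ContainsCone Ω ε r p e := by
  refine hΩc.induction_on (p := fun S => ∃ r > 0, ∀ p ∈ S, ∀ e : E, ‖e‖ = 1 → ∀ δ > 0,
    ball (p + δ • e) δ ⊆ Ω → ContainsCone Ω ε r p e) ⟨1, one_pos, by simp⟩ ?_ ?_ ?_
  · rintro S T hST ⟨r, hr, h⟩
    exact ⟨r, hr, fun p hp => h p (hST hp)⟩
  · rintro S T ⟨r, hr, h⟩ ⟨r', hr', h'⟩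
    refine ⟨min r r', lt_min hr hr', ?_⟩
    rintro p (hp | hp) e he δ hδ hball
    · exact (h p hp e he δ hδ hball).mono le_rfl (min_le_left _ _)
    · exact (h' p hp e he δ hδ hball).mono le_rfl (min_le_right _ _)
  · intro p₀ hp₀
    obtain ⟨f, hf, hf', hΩf⟩ := hΩ1 p₀ hp₀
    obtain ⟨n, hn, r, hr, hcones⟩ :=
      exists_containsCone_nhdsWithin_frontier hΩ hf hf' hΩf (show 0 < ε / 3 by positivity)
    refine ⟨_, hcones, r, hr, fun p ⟨hin, hout⟩ e he δ hδ hball => ?_⟩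
    have hne := hout.norm_sub_le_of_ball_subset (by positivity) hr hn he hδ hball
    exact (hin.change_axis e).mono (by linarith) le_rfl

end C1Boundary

section LowerBounds

theorem ofReal_pow_mul_le_hausdorffMeasure_of_forall_exists_mem {E : Type*} [NormedAddCommGroup E]
    [InnerProductSpace ℝ E] [MeasurableSpace E] [BorelSpace E] {k : ℕ} (hE : finrank ℝ E = k + 1)
    {S : Set E} {p e : E} (he : e ≠ 0) {ρ : ℝ} (hρ : 0 < ρ)
    (hS : ∀ v, ⟪e, v⟫ = 0 → ‖v‖ < ρ → ∃ t : ℝ, p + t • e + v ∈ S) :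
    ENNReal.ofReal (ρ ^ k) * μH[k] (ball (0 : EuclideanSpace ℝ (Fin k)) 1) ≤ μH[k] S := by
  have : Fact (finrank ℝ E = k + 1) := ⟨hE⟩
  let b := OrthonormalBasis.fromOrthogonalSpanSingleton (𝕜 := ℝ) k he
  let K : Submodule ℝ E := (ℝ ∙ e)ᗮ
  have himage : ball (K.orthogonalProjectionOnto p) ρ ⊆ K.orthogonalProjectionOnto '' S := by
    intro z hz
    set v := z - K.orthogonalProjectionOnto p with hv
    obtain ⟨t, ht⟩ := hS v (Submodule.mem_orthogonal_singleton_iff_inner_right.1 v.2)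
      (mem_ball_iff_norm.1 hz)
    refine ⟨_, ht, ?_⟩
    have hte : K.orthogonalProjectionOnto e = 0 :=
      Submodule.orthogonalProjectionOnto_orthogonalComplement_singleton_eq_zero e
    simp only [map_add, map_smul, hte, smul_zero, add_zero, hv,
      Submodule.orthogonalProjectionOnto_mem_subspace_eq_self, add_sub_cancel]
  calc ENNReal.ofReal (ρ ^ k) * μH[k] (ball (0 : EuclideanSpace ℝ (Fin k)) 1)
      = μH[k] (ball (b.repr (K.orthogonalProjectionOnto p)) ρ) := by
        rw [Measure.addHaar_ball_of_pos _ _ hρ, finrank_euclideanSpace_fin]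
    _ = μH[k] (ball (K.orthogonalProjectionOnto p) ρ) := by
        rw [← b.repr.image_ball]
        exact b.repr.toIsometryEquiv.hausdorffMeasure_image _ _
    _ ≤ μH[k] (K.orthogonalProjectionOnto '' S) := measure_mono himage
    _ ≤ μH[k] S := hausdorffMeasure_orthogonalProjectionOnto_le K k S k.cast_nonneg

theorem ofReal_rpow_mul_le_setLIntegral_dist_rpow {X : Type*} [MetricSpace X] [MeasurableSpace X]
    [OpensMeasurableSpace X] (μ : Measure X) [NullSingletonClass μ] {S : Set X} {y : X} {R s : ℝ}
    (hS : S ⊆ ball y R) (hs : s ≤ 0) :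
    ENNReal.ofReal (R ^ s) * μ S ≤ ∫⁻ x in S, ENNReal.ofReal (dist x y ^ s) ∂μ := by
  rw [← setLIntegral_const]
  refine lintegral_mono_ae ?_
  filter_upwards [ae_restrict_of_ae_restrict_of_subset hS (ae_restrict_mem measurableSet_ball),
    ae_restrict_of_ae (compl_mem_ae_iff.2 (measure_singleton y))] with x hxR hxy
  exact ENNReal.ofReal_le_ofReal
    (Real.rpow_le_rpow_of_nonpos (dist_pos.2 hxy) (mem_ball.1 hxR).le hs)

variable {E : Type*} [NormedAddCommGroup E] [InnerProductSpace ℝ E] {Ω : Set E}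
  {r β η : ℝ} {p e : E}

theorem ContainsCone.exists_infDist_compl_eq (h : ContainsCone Ω (η / 2) r p e) (hp : p ∈ Ωᶜ)
    (he : ‖e‖ = 1) (hη : 0 < η) (hη' : η ≤ 1 / 4) (hβ : 0 < β) (hβr : 4 * β ≤ r) {v : E}
    (hv : ‖v‖ ≤ η * β) :
    ∃ t ∈ Icc ((1 - η) * β) ((1 + 3 * η) * β), infDist (p + t • e + v) Ωᶜ = β := by
  have hηβ : 0 < η * β := mul_pos hη hβ
  have hηβ' : η * (η * β) ≤ 1 / 4 * (η * β) := mul_le_mul_of_nonneg_right hη' hηβ.le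
  have hcont : Continuous fun t : ℝ => infDist (p + t • e + v) Ωᶜ :=
    (continuous_infDist_pt _).comp (by fun_prop)
  have hlow : infDist (p + ((1 - η) * β) • e + v) Ωᶜ ≤ β := by
    have hpos : 0 ≤ (1 - η) * β := mul_nonneg (by linarith) hβ.le
    calc infDist (p + ((1 - η) * β) • e + v) Ωᶜ ≤ dist (p + ((1 - η) * β) • e + v) p :=
          infDist_le_dist_of_mem hp
      _ = ‖((1 - η) * β) • e + v‖ := by rw [dist_eq_norm, add_assoc, add_sub_cancel_left]
      _ ≤ (1 - η) * β + ‖v‖ := by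
          simpa only [norm_smul, he, mul_one, Real.norm_of_nonneg hpos] using
            norm_add_le (((1 - η) * β) • e) v
      _ ≤ β := by linarith
  -- The height `(1 + 3 * η) * β` comes from `1 + η ≤ (1 - η) * (1 + 3 * η)`.
  have hhigh : β ≤ infDist (p + ((1 + 3 * η) * β) • e + v) Ωᶜ := by
    have hball := h.ball_subset he (by positivity) (t := (1 + 3 * η) * β) (by positivity)
      (by linarith [mul_le_mul_of_nonneg_right hη' hβ.le])
    refine (le_infDist ⟨p, hp⟩).2 fun q hq => not_lt.1 fun hlt => hq (hball ?_)
    rw [mem_ball, dist_comm]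
    calc dist (p + ((1 + 3 * η) * β) • e) q
        ≤ ‖v‖ + dist (p + ((1 + 3 * η) * β) • e + v) q := by
          simpa using dist_triangle (p + ((1 + 3 * η) * β) • e)
            (p + ((1 + 3 * η) * β) • e + v) q
      _ < η * β + β := add_lt_add_of_le_of_lt hv hlt
      _ ≤ (1 - 2 * (η / 2)) * ((1 + 3 * η) * β) := by linarith
  exact intermediate_value_Icc (by linarith) hcont.continuousOn ⟨hlow, hhigh⟩

theorem ContainsCone.ofReal_pow_mul_le_hausdorffMeasure [MeasurableSpace E] [BorelSpace E] {k : ℕ}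
    (hE : finrank ℝ E = k + 1) (h : ContainsCone Ω (η / 2) r p e) (hp : p ∈ Ωᶜ) (he : ‖e‖ = 1)
    (hη : 0 < η) (hη' : η ≤ 1 / 4) (hβ : 0 < β) (hβr : 4 * β ≤ r) {δ R : ℝ} (hδ : 0 ≤ δ)
    (hδR : δ ≤ R) (hβR : (1 + 4 * η) * β ≤ R) :
    ENNReal.ofReal ((η * β) ^ k) * μH[k] (ball (0 : EuclideanSpace ℝ (Fin k)) 1) ≤
      μH[k] ({x | infDist x Ωᶜ = β} ∩ ball (p + δ • e) R) := by
  refine ofReal_pow_mul_le_hausdorffMeasure_of_forall_exists_mem (p := p) hE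
    (norm_ne_zero_iff.1 (he ▸ one_ne_zero)) (mul_pos hη hβ) fun v _ hv => ?_
  obtain ⟨t, ⟨htl, htu⟩, ht⟩ := h.exists_infDist_compl_eq hp he hη hη' hβ hβr hv.le
  refine ⟨t, ht, ?_⟩
  have hsub : p + t • e + v - (p + δ • e) = (t - δ) • e + v := by rw [sub_smul]; abel
  have hηβ : η * β ≤ 1 / 4 * β := mul_le_mul_of_nonneg_right hη' hβ.le
  have habs : |t - δ| ≤ R - η * β := abs_le.2 ⟨by linarith, by linarith⟩
  calc dist (p + t • e + v) (p + δ • e) = ‖(t - δ) • e + v‖ := by rw [dist_eq_norm, hsub]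
    _ ≤ |t - δ| + ‖v‖ := by simpa [norm_smul, he] using norm_add_le ((t - δ) • e) v
    _ < R := by linarith

variable [FiniteDimensional ℝ E] [MeasurableSpace E] [BorelSpace E]

theorem HasC1Boundary.exists_le_hausdorffMeasure_infDist_compl_eq (hΩ1 : HasC1Boundary Ω)
    (hΩ : IsOpen Ω) (hΩu : Ω ≠ univ) (hΩc : IsCompact (frontier Ω)) {k : ℕ}
    (hE : finrank ℝ E = k + 1) {a : ℝ} (ha : 1 < a) :
    ∃ C > 0, ∃ β₀ > 0, ∀ β ∈ Ioo 0 β₀, ∀ y ∈ Ω, infDist y Ωᶜ ≤ a * β →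
      ENNReal.ofReal (C * β ^ k) ≤ μH[k] ({x | infDist x Ωᶜ = β} ∩ ball y (a * β)) := by
  let η := min (1 / 4) ((a - 1) / 4)
  have hη : 0 < η := lt_min (by norm_num) (by linarith)
  have hηa : 1 + 4 * η ≤ a := by linarith [min_le_right (1 / 4) ((a - 1) / 4)]
  obtain ⟨r, hr, hcone⟩ := hΩ1.exists_containsCone_of_ball_subset hΩ hΩc (half_pos hη)
  let κ := μH[k].real (ball (0 : EuclideanSpace ℝ (Fin k)) 1)
  have hκ : 0 < κ := ENNReal.toReal_pos (measure_ball_pos _ _ one_pos).ne' measure_ball_lt_top.ne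
  refine ⟨η ^ k * κ, by positivity, r / 4, by positivity, fun β ⟨hβ, hβr⟩ y hy hyβ => ?_⟩
  obtain ⟨p, hp, hyp⟩ := exists_mem_frontier_infDist_compl_eq_dist hy hΩu
  have hpΩ : p ∈ Ωᶜ := disjoint_left.1 (disjoint_frontier_iff_isOpen.2 hΩ) hp
  have hδ : 0 < ‖y - p‖ := norm_sub_pos_iff.2 (ne_of_mem_of_not_mem hy hpΩ)
  rw [dist_eq_norm] at hyp
  obtain ⟨e, he, hye⟩ : ∃ e : E, ‖e‖ = 1 ∧ p + ‖y - p‖ • e = y :=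
    ⟨‖y - p‖⁻¹ • (y - p), by simp [norm_smul, hδ.ne'], by simp [smul_smul, hδ.ne']⟩
  have hball : ball (p + ‖y - p‖ • e) ‖y - p‖ ⊆ Ω := by
    rw [hye, ← hyp]
    exact ball_infDist_compl_subset
  have hbound := (hcone p hp e he _ hδ hball).ofReal_pow_mul_le_hausdorffMeasure hE hpΩ he hη
    (min_le_left _ _) hβ (by linarith) hδ.le (hyp ▸ hyβ) (mul_le_mul_of_nonneg_right hηa hβ.le)
  rw [hye, ← ofReal_measureReal measure_ball_lt_top.ne, ← ENNReal.ofReal_mul (by positivity)]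
    at hbound
  refine le_of_eq_of_le ?_ hbound
  congr 1
  ring

theorem stmt14_general {N : ℕ} (hE : finrank ℝ E = N) (hN : 2 ≤ N) (hΩ : IsOpen Ω)
    (hΩu : Ω ≠ univ) (hΩc : IsCompact (frontier Ω)) (hΩ1 : HasC1Boundary Ω) {a : ℝ} (ha : 1 < a) :
    ∃ c : ℝ, 1 ≤ c ∧ ∃ β₀ : ℝ, 0 < β₀ ∧
      ∀ β ∈ Ioo (0 : ℝ) β₀, ∀ y ∈ Ω, infDist y (frontier Ω) ≤ a * β →
        ENNReal.ofReal (β / c) ≤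
          ∫⁻ x in {x ∈ Ω | infDist x (frontier Ω) = β} ∩ {x | dist x y < a * β},
            ENNReal.ofReal (dist x y ^ ((2 : ℝ) - N)) ∂μH[(N : ℝ) - 1] := by
  obtain ⟨k, rfl⟩ : ∃ k, N = k + 1 + 1 := ⟨N - 2, by omega⟩
  have hdim : ((k + 1 + 1 : ℕ) : ℝ) - 1 = (k + 1 : ℕ) := by push_cast; ring
  have hexp : (2 : ℝ) - (k + 1 + 1 : ℕ) = -k := by push_cast; ring
  rw [hdim, hexp]
  have : NullSingletonClass (μH[(k + 1 : ℕ)] : Measure E) :=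
    Measure.nullSingletonClass_hausdorff E (by positivity)
  obtain ⟨C, hC, β₀, hβ₀, hlevel⟩ :=
    hΩ1.exists_le_hausdorffMeasure_infDist_compl_eq hΩ hΩu hΩc hE ha
  refine ⟨max 1 (a ^ k / C), le_max_left _ _, β₀, hβ₀, fun β hβ y hy hyβ => ?_⟩
  have hβ0 : 0 < β := hβ.1
  have ha0 : 0 < a := by linarith
  rw [infDist_frontier_eq_infDist_compl hΩ hΩu hy] at hyβ
  have hsub := inter_subset_inter_left (ball y (a * β))
    (setOf_infDist_compl_eq_subset hΩ hΩu hβ0)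
  calc ENNReal.ofReal (β / max 1 (a ^ k / C))
      ≤ ENNReal.ofReal (β / (a ^ k / C)) := by gcongr; exact le_max_right _ _
    _ = ENNReal.ofReal ((a * β) ^ (-k : ℝ)) * ENNReal.ofReal (C * β ^ (k + 1)) := by
        rw [← ENNReal.ofReal_mul (by positivity), Real.rpow_neg (by positivity),
          Real.rpow_natCast]
        congr 1
        rw [mul_pow, pow_succ]
        field_simp
    _ ≤ ENNReal.ofReal ((a * β) ^ (-k : ℝ)) *
          μH[(k + 1 : ℕ)] ({x ∈ Ω | infDist x (frontier Ω) = β} ∩ ball y (a * β)) := by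
        gcongr
        exact (hlevel β hβ y hy hyβ).trans (measure_mono hsub)
    _ ≤ _ := ofReal_rpow_mul_le_setLIntegral_dist_rpow _ inter_subset_right (by simp)

end LowerBounds

theorem stmt14 {N : ℕ} (hN : 3 ≤ N) (Ω : Set (EuclideanSpace ℝ (Fin N)))
    (hΩo : IsOpen Ω) (hΩb : Bornology.IsBounded Ω) (hΩ2 : HasC2Boundary Ω)
    (a : ℝ) (ha : 2 ≤ a) :
    ∃ c : ℝ, 1 ≤ c ∧ ∃ β₀ : ℝ, 0 < β₀ ∧
      ∀ β ∈ Set.Ioo (0:ℝ) β₀, ∀ y ∈ Ω, Metric.infDist y (frontier Ω) ≤ a / 2 * β →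
        ENNReal.ofReal (β / c) ≤
          (∫⁻ x in {x ∈ Ω | Metric.infDist x (frontier Ω) = β} ∩ {x | dist x y < a * β},
            ENNReal.ofReal (dist x y ^ ((2:ℝ) - N)) ∂(μH[(N:ℝ) - 1])) := by
  have : Nontrivial (EuclideanSpace ℝ (Fin N)) :=
    nontrivial_of_finrank_pos (R := ℝ) (by rw [finrank_euclideanSpace_fin]; omega)
  obtain ⟨c, hc, β₀, hβ₀, h⟩ := stmt14_general finrank_euclideanSpace_fin (by omega) hΩo
    (ne_univ_of_isBounded hΩb) (isCompact_frontier_of_isBounded hΩb) hΩ2.hasC1Boundary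
    (show 1 < a by linarith)
  exact ⟨c, hc, β₀, hβ₀, fun β hβ y hy hyβ =>
    h β hβ y hy (hyβ.trans (mul_le_mul_of_nonneg_right (by linarith) hβ.1.le))⟩
end
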